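/- arXiv:1708.08014 — 3 statements merged into one kernel-verified Lean document; each statement's English description precedes it below -/
import Mathlib

section
/- Refined L⁴ inequality in the anisotropic Sobolev space: there is a universal constant C such that for every f ∈ C_c^∞(ℝ²), ‖f‖_{L⁴(ℝ²)} ≤ C (sup_{M,N} (MN)^{−1/4} ‖Q_{M,N}f‖_{L^∞(ℝ²)})^{1/6} ‖f‖_{Ḣ_h^{1/2}}^{5/6}, where the supremum is over all dyadic M, N > 0; in particular ‖f‖_{L⁴(ℝ²)} ≤ C ‖f‖_{Ḣ_h^{1/2}}. -/
/-!
Write `q_v = |Q_v f|` for the Littlewood–Paley piece at the frequencies `v = (k, l)`, i.e.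
`|ξ| ~ 2^k`, `|η| ~ 2^l`, let `α_v = 2^{(k+l)/2} ‖Q_v f‖₂²`, and let `S` be the supremum in the
theorem. Almost orthogonality gives `∑ α_v ≲ ‖f‖²` in `Ḣ_h^{1/2}` (`tsum_energy_le`), and
`|f| ≤ ∑ q_v` pointwise (`enorm_le_tsum`), so the task is to bound `∫ (∑ q_v)⁴`.

The core is the bilinear quantity `‖q_v q_w‖₂²`. Putting one factor in `L^∞` and the other in `L²`
bounds it by `S²` times an `α`. Bernstein's inequality (Plancherel in one variable, support of the
frequencies and Cauchy–Schwarz) bounds it by `α_v α_w 2^{-(|Δk| + |Δl|)/2}`: when the same piece is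
the lower one in both variables it goes in `L^∞`, and otherwise the mixed norms `L^∞_x L²_y` and
`L²_x L^∞_y` are used (`bilinear_besov`, `bilinear_parallel`, `bilinear_transverse`). The geometric
mean with weights `1/3` and `2/3` yields
`‖q_v q_w‖₂² ≲ S^{2/3} max(α_v, α_w)^{5/3} 2^{-(|Δk| + |Δl|)/3}`.

In the expansion of `∫ (∑ q_v)⁴` each integral `∫ q_a q_b q_c q_d` is estimated by Cauchy–Schwarz
for the pairings `ab|cd` and `ac|bd` simultaneously. The product of the two gives geometric decay
along the tree `b - a - c - d`, enough to sum over three of the four indices. What remains is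
`S^{2/3} ∑ α_v^{5/3} ≤ S^{2/3} (∑ α_v)^{5/3}` (`quartic_sum_le`), and a fourth root gives the first
inequality. The second one follows from `S ≲ ‖f‖` in `Ḣ_h^{1/2}`, again by Bernstein (`besov_le`).
-/

open MeasureTheory Real Complex Filter
open scoped ENNReal

/-- The Fourier transform on `ℝ²`. -/
noncomputable def ft (f : ℝ × ℝ → ℂ) : ℝ × ℝ → ℂ := fun ξ =>
  ∫ x : ℝ × ℝ, Complex.exp (-2 * Real.pi * (x.1 * ξ.1 + x.2 * ξ.2) * Complex.I) * f x

/-- The inverse Fourier transform on `ℝ²`. -/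
noncomputable def ftInv (f : ℝ × ℝ → ℂ) : ℝ × ℝ → ℂ := fun x =>
  ∫ ξ : ℝ × ℝ, Complex.exp (2 * Real.pi * (x.1 * ξ.1 + x.2 * ξ.2) * Complex.I) * f ξ

/-- A fixed smooth bump function: `φ₀ = 1` on `[-1,1]` and `φ₀ = 0` outside `[-2,2]`. -/
def IsBump (φ₀ : ℝ → ℝ) : Prop :=
  ContDiff ℝ (⊤ : ℕ∞) φ₀ ∧ (∀ x : ℝ, |x| ≤ 1 → φ₀ x = 1) ∧ (∀ x : ℝ, 2 ≤ |x| → φ₀ x = 0)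

/-- The Littlewood–Paley projection `Q_{M,N}`:
`(Q_{M,N}f)^(ξ,η) = ψ(M⁻¹ξ)ψ(N⁻¹η) f̂(ξ,η)` with `ψ(x) = φ₀(x) − φ₀(2x)`. -/
noncomputable def QMN (φ₀ : ℝ → ℝ) (M N : ℝ) (f : ℝ × ℝ → ℂ) : ℝ × ℝ → ℂ :=
  ftInv (fun p : ℝ × ℝ =>
    (((φ₀ (M⁻¹ * p.1) - φ₀ (2 * (M⁻¹ * p.1))) *
      (φ₀ (N⁻¹ * p.2) - φ₀ (2 * (N⁻¹ * p.2))) : ℝ) : ℂ) * ft f p)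

/-- The anisotropic derivative `|∂ₓ|^{s/2}|∂_y|^{s/2}`, the Fourier multiplier with
symbol `|ξ|^{s/2}|η|^{s/2}`; `‖f‖_{Ḣ_h^s} = ‖|∂ₓ|^{s/2}|∂_y|^{s/2} f‖_{L²}`. -/
noncomputable def anisoDeriv (s : ℝ) (f : ℝ × ℝ → ℂ) : ℝ × ℝ → ℂ :=
  ftInv (fun p : ℝ × ℝ => ((|p.1| ^ (s/2) * |p.2| ^ (s/2) : ℝ) : ℂ) * ft f p)

/-! ### Plancherel's theorem on the line for functions in `L¹ ∩ L²` -/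

open scoped FourierTransform SchwartzMap

/-- The `L²` Fourier transform, defined by extension from Schwartz functions, is given by the
Fourier integral on `L¹ ∩ L²`: both represent the same tempered distribution. -/
theorem plancherel_ae (g : ℝ → ℂ) (h1 : Integrable g) (h2 : MemLp g 2) :
    ((𝓕 (h2.toLp g) : Lp ℂ 2 (volume : Measure ℝ)) : ℝ → ℂ) =ᵐ[volume] 𝓕 g := by
  set u : Lp ℂ 2 (volume : Measure ℝ) := 𝓕 (h2.toLp g) with hu
  have hcont : Continuous (𝓕 g) := VectorFourier.fourierIntegral_continuous
      Real.continuous_fourierChar (by exact continuous_inner) h1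
  refine ae_eq_of_integral_contDiff_smul_eq ?_ hcont.locallyIntegrable ?_
  · exact (Lp.memLp u).locallyIntegrable (by norm_num)
  intro φ hφ hφc
  let φc : ℝ → ℂ := fun x => (φ x : ℂ)
  have hφc' : HasCompactSupport φc := hφc.comp_left (g := fun x : ℝ => (x : ℂ)) (by simp)
  have hφs : ContDiff ℝ (⊤ : ℕ∞) φc := Complex.ofRealCLM.contDiff.comp hφ
  let Φ : 𝓢(ℝ, ℂ) := hφc'.toSchwartzMap hφs
  have key := congrArg (fun T => T Φ) (Lp.fourier_toTemperedDistribution_eq (h2.toLp g))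
  simp only [TemperedDistribution.fourier_apply] at key
  rw [Lp.toTemperedDistribution_apply, Lp.toTemperedDistribution_apply] at key
  have e1 : ∫ x, (𝓕 Φ) x • (h2.toLp g) x = ∫ x, (𝓕 φc) x • g x := by
    apply integral_congr_ae
    filter_upwards [h2.coeFn_toLp] with x hx
    rw [hx]; rfl
  have e2 : ∫ x, Φ x • u x = ∫ x, φ x • u x := by
    apply integral_congr_ae
    filter_upwards with x
    rfl
  have e3 : ∫ x, (𝓕 φc) x • g x = ∫ x, φc x • 𝓕 g x := by
    have hi : Integrable φc := hφs.continuous.integrable_of_hasCompactSupport hφc'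
    have := VectorFourier.integral_fourierIntegral_smul_eq_flip (L := innerₗ ℝ)
      Real.continuous_fourierChar continuous_inner hi h1
    rwa [flip_innerₗ] at this
  have : ∫ x, φ x • 𝓕 g x = ∫ x, φc x • 𝓕 g x := rfl
  rw [this, ← e3, ← e1, key, ← e2]

theorem plancherel (g : ℝ → ℂ) (h1 : Integrable g) (h2 : MemLp g 2) :
    ∫⁻ x, ‖𝓕 g x‖ₑ ^ 2 = ∫⁻ x, ‖g x‖ₑ ^ 2 := by
  have h := Lp.norm_fourier_eq (h2.toLp g)
  rw [Lp.norm_def, Lp.norm_def, ENNReal.toReal_eq_toReal_iff' (Lp.eLpNorm_ne_top _)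
    (Lp.eLpNorm_ne_top _), eLpNorm_congr_ae (plancherel_ae g h1 h2),
    eLpNorm_congr_ae h2.coeFn_toLp] at h
  have e := fun f : ℝ → ℂ => eLpNorm_nnreal_pow_eq_lintegral (μ := volume) (f := f) (p := 2) (by norm_num)
  have h1 := e (𝓕 g)
  have h2 := e g
  simp at h1 h2
  rw [← h1, ← h2]
  erw [h]

theorem plancherel_inv (g : ℝ → ℂ) (h1 : Integrable g) (h2 : MemLp g 2) :
    ∫⁻ x, ‖𝓕⁻ g x‖ₑ ^ 2 = ∫⁻ x, ‖g x‖ₑ ^ 2 := by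
  rw [← plancherel g h1 h2, ← lintegral_neg_eq_self]
  simp [Real.fourierInv_eq_fourier_neg]

/-! ### The Fourier transform of a test function on the plane -/

/-- `ft` is Mathlib's Fourier transform on `ℝ²` with its Euclidean structure; `ℝ × ℝ` itself
carries the sup norm. -/
theorem ft_eq (f : ℝ × ℝ → ℂ) (p : ℝ × ℝ) :
    ft f p = 𝓕 (fun z : WithLp 2 (ℝ × ℝ) => f (WithLp.ofLp z)) (WithLp.toLp 2 p) := by
  rw [Real.fourier_eq', ← (WithLp.volume_preserving_toLp (U := ℝ) (V := ℝ)).integral_comp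
    (MeasurableEquiv.toLp 2 (ℝ × ℝ)).measurableEmbedding]
  unfold ft
  congr 1
  ext x
  simp only [WithLp.prod_inner_apply, smul_eq_mul]
  congr 2
  simp [mul_comm]

theorem ftInv_eq (f : ℝ × ℝ → ℂ) (p : ℝ × ℝ) :
    ftInv f p = 𝓕⁻ (fun z : WithLp 2 (ℝ × ℝ) => f (WithLp.ofLp z)) (WithLp.toLp 2 p) := by
  rw [Real.fourierInv_eq', ← (WithLp.volume_preserving_toLp (U := ℝ) (V := ℝ)).integral_comp
    (MeasurableEquiv.toLp 2 (ℝ × ℝ)).measurableEmbedding]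
  unfold ftInv
  congr 1
  ext x
  simp only [WithLp.prod_inner_apply, smul_eq_mul]
  congr 2
  simp

/-- Continuity and decay of `f̂`, and Fourier inversion, for a test function `f`; all are
inherited from the Schwartz space. -/
theorem ft_props (f : ℝ × ℝ → ℂ) (hf : ContDiff ℝ (⊤ : ℕ∞) f) (hc : HasCompactSupport f) :
    Continuous (ft f) ∧
    (∃ C, ∀ p, (1 + p.1 ^ 2) ^ 2 * (1 + p.2 ^ 2) ^ 2 * ‖ft f p‖ ≤ C) ∧ ftInv (ft f) = f := by
  have hs : ContDiff ℝ (⊤ : ℕ∞) (fun z : WithLp 2 (ℝ × ℝ) => f (WithLp.ofLp z)) :=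
    hf.comp (WithLp.prodContinuousLinearEquiv 2 ℝ ℝ ℝ).contDiff
  have hcs : HasCompactSupport (fun z : WithLp 2 (ℝ × ℝ) => f (WithLp.ofLp z)) :=
    hc.comp_homeomorph (WithLp.homeomorphProd 2 ℝ ℝ)
  let Φ : 𝓢(WithLp 2 (ℝ × ℝ), ℂ) := hcs.toSchwartzMap hs
  have hΦ : (fun z : WithLp 2 (ℝ × ℝ) => f (WithLp.ofLp z)) = (Φ : WithLp 2 (ℝ × ℝ) → ℂ) := rfl
  have hft : ∀ p, ft f p = (𝓕 Φ : 𝓢(WithLp 2 (ℝ × ℝ), ℂ)) (WithLp.toLp 2 p) := by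
    intro p
    rw [ft_eq, hΦ, SchwartzMap.fourier_coe]
  refine ⟨?_, ?_, ?_⟩
  · rw [show ft f = _ from funext hft]
    exact (𝓕 Φ).continuous.comp (WithLp.prod_continuous_toLp 2 ℝ ℝ)
  · refine ⟨2 ^ 8 * ((Finset.Iic ((8 : ℕ), (0 : ℕ))).sup
      (fun m => SchwartzMap.seminorm ℝ m.1 m.2)) (𝓕 Φ), fun p => ?_⟩
    have h := SchwartzMap.one_add_le_sup_seminorm_apply (𝕜 := ℝ) (m := (8, 0)) (k := 8) (n := 0)
      le_rfl le_rfl (𝓕 Φ) (WithLp.toLp 2 p)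
    rw [norm_iteratedFDeriv_zero, ← hft] at h
    refine le_trans ?_ h
    gcongr
    have hn := WithLp.prod_norm_sq_eq_of_L2 (WithLp.toLp 2 p)
    simp only [Real.norm_eq_abs, sq_abs] at hn
    set n := ‖WithLp.toLp 2 p‖
    replace hn : n ^ 2 = p.1 ^ 2 + p.2 ^ 2 := hn
    have hn0 : 0 ≤ n := norm_nonneg _
    have h1 : 1 + p.1 ^ 2 ≤ (1 + n) ^ 2 := by nlinarith [sq_nonneg p.2]
    have h2 : 1 + p.2 ^ 2 ≤ (1 + n) ^ 2 := by nlinarith [sq_nonneg p.1]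
    calc (1 + p.1 ^ 2) ^ 2 * (1 + p.2 ^ 2) ^ 2 ≤ ((1 + n) ^ 2) ^ 2 * ((1 + n) ^ 2) ^ 2 := by gcongr
      _ = _ := by ring
  · ext p
    rw [ftInv_eq]
    have : (fun z : WithLp 2 (ℝ × ℝ) => ft f (WithLp.ofLp z)) = (𝓕 Φ : 𝓢(WithLp 2 (ℝ × ℝ), ℂ)) := by
      ext z; rw [hft]
    rw [this, ← SchwartzMap.fourierInv_coe, FourierTransform.fourierInv_fourier_eq]
    rfl

/-! ### Mixed-norm Plancherel and Bernstein inequalities -/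

/-- Frequency-side functions with enough decay to apply Fubini and the one-dimensional Plancherel
theorem in each variable separately. -/
structure Nice (h : ℝ × ℝ → ℂ) : Prop where
  cont : Continuous h
  bound : ∃ C : ℝ, ∀ p : ℝ × ℝ, ‖h p‖ ≤ C * ((1 + p.1 ^ 2)⁻¹ * (1 + p.2 ^ 2)⁻¹)

/-- The inverse Fourier transform of `h` in its first variable only. -/
noncomputable def partialInv (h : ℝ × ℝ → ℂ) (x η : ℝ) : ℂ := 𝓕⁻ (fun ξ : ℝ => h (ξ, η)) x

/-- The square of the `L²` norm, with values in `[0, ∞]`. -/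
noncomputable def energy (h : ℝ × ℝ → ℂ) : ℝ≥0∞ := ∫⁻ p, ‖h p‖ₑ ^ 2

theorem memLp_two_of_bound {g : ℝ → ℂ} (hg : Continuous g) {C : ℝ}
    (hb : ∀ t, ‖g t‖ ≤ C * (1 + t ^ 2)⁻¹) : Integrable g ∧ MemLp g 2 := by
  have hi : Integrable g := (integrable_inv_one_add_sq.const_mul C).mono' hg.aestronglyMeasurable
    (Eventually.of_forall hb)
  have hC : 0 ≤ C := by have := (norm_nonneg _).trans (hb 0); simpa using this
  refine ⟨hi, (memLp_two_iff_integrable_sq_norm hg.aestronglyMeasurable).2 ?_⟩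
  refine (integrable_inv_one_add_sq.const_mul (C * C)).mono' (by fun_prop)
    (Eventually.of_forall fun t => ?_)
  rw [norm_pow, norm_norm, sq]
  have h1 : (1 + t ^ 2)⁻¹ ≤ 1 := inv_le_one_of_one_le₀ (by nlinarith [sq_nonneg t])
  have h0 : 0 ≤ (1 + t ^ 2)⁻¹ := by positivity
  calc ‖g t‖ * ‖g t‖ ≤ (C * (1 + t ^ 2)⁻¹) * (C * 1) := by
        gcongr
        · exact hb t
        · exact (hb t).trans (by gcongr)
    _ = _ := by ring

/-- Cauchy–Schwarz on the interval `[-R, R]` that carries `g`. -/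
theorem sq_lintegral_le {g : ℝ → ℂ} (hg : Continuous g) {R : ℝ}
    (hR : ∀ t, R < |t| → g t = 0) :
    (∫⁻ t, ‖g t‖ₑ) ^ 2 ≤ ENNReal.ofReal (2 * R) * ∫⁻ t, ‖g t‖ₑ ^ 2 := by
  have hs : ∫⁻ t, ‖g t‖ₑ = ∫⁻ t in Set.Icc (-R) R, ‖g t‖ₑ * 1 := by
    rw [← lintegral_indicator measurableSet_Icc]
    congr 1
    ext t
    by_cases ht : t ∈ Set.Icc (-R) R
    · simp [ht]
    · rw [Set.indicator_of_notMem ht, hR t, enorm_zero]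
      by_contra! hc
      exact ht (abs_le.1 hc)
  rw [hs]
  have h := ENNReal.lintegral_mul_le_Lp_mul_Lq (volume.restrict (Set.Icc (-R) R))
    (p := 2) (q := 2) (by norm_num [Real.holderConjugate_iff]) (f := fun t => ‖g t‖ₑ) (g := fun _ => 1)
    (by fun_prop) (by fun_prop)
  simp only [Pi.mul_apply] at h
  calc _ ≤ _ := pow_le_pow_left₀ (by positivity) h 2
    _ ≤ _ := by
      rw [mul_pow, ← ENNReal.rpow_natCast, ← ENNReal.rpow_natCast, ← ENNReal.rpow_mul,
        ← ENNReal.rpow_mul, mul_comm]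
      norm_num
      rw [show R + R = 2 * R by ring, ENNReal.ofReal_mul (by norm_num)]
      norm_num
      gcongr
      exact Measure.restrict_le_self

namespace Nice

variable {h : ℝ × ℝ → ℂ}

theorem integrable (hh : Nice h) : Integrable h := by
  obtain ⟨C, hC⟩ := hh.bound
  exact ((integrable_inv_one_add_sq.mul_prod integrable_inv_one_add_sq).const_mul C).mono'
    hh.cont.aestronglyMeasurable (Eventually.of_forall hC)

theorem slice (hh : Nice h) (η : ℝ) :
    Integrable (fun ξ => h (ξ, η)) ∧ MemLp (fun ξ => h (ξ, η)) 2 := by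
  obtain ⟨C, hC⟩ := hh.bound
  have hc := hh.cont
  refine memLp_two_of_bound (C := C * (1 + η ^ 2)⁻¹) (by fun_prop) fun t => ?_
  exact (hC (t, η)).trans (le_of_eq (by ring))

theorem partialInv_eq (x η : ℝ) :
    partialInv h x η = ∫ ξ : ℝ, Complex.exp (2 * Real.pi * (x * ξ) * Complex.I) * h (ξ, η) := by
  rw [partialInv, Real.fourierInv_eq']
  congr 1
  ext ξ
  simp only [smul_eq_mul, RCLike.inner_apply, conj_trivial]
  congr 2
  push_cast
  ring

theorem norm_char (x ξ : ℝ) : ‖Complex.exp (2 * Real.pi * (x * ξ) * Complex.I)‖ = 1 := by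
  rw [show (2 * Real.pi * (x * ξ) * Complex.I : ℂ) = ((2 * Real.pi * (x * ξ) : ℝ) : ℂ) * Complex.I by
    push_cast; ring]
  exact Complex.norm_exp_ofReal_mul_I _

theorem norm_char₂ (a b c d : ℝ) :
    ‖Complex.exp (2 * Real.pi * (a * b + c * d) * Complex.I)‖ = 1 := by
  rw [show (2 * Real.pi * (a * b + c * d) * Complex.I : ℂ)
    = ((2 * Real.pi * (a * b + c * d) : ℝ) : ℂ) * Complex.I by push_cast; ring]
  exact Complex.norm_exp_ofReal_mul_I _

theorem continuous_partialInv (hh : Nice h) :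
    Continuous (fun p : ℝ × ℝ => partialInv h p.1 p.2) := by
  obtain ⟨C, hC⟩ := hh.bound
  have hc := hh.cont
  simp_rw [partialInv_eq]
  have hC0 : 0 ≤ C := by have := (norm_nonneg _).trans (hC 0); simpa using this
  refine continuous_of_dominated (bound := fun ξ => C * (1 + ξ ^ 2)⁻¹) (fun p => ?_)
    (fun p => Eventually.of_forall fun ξ => ?_) (integrable_inv_one_add_sq.const_mul C)
    (Eventually.of_forall fun ξ => by fun_prop)
  · exact Continuous.aestronglyMeasurable (by fun_prop)
  · rw [norm_mul, norm_char, one_mul]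
    refine (hC _).trans ?_
    have h1 : (1 + p.2 ^ 2)⁻¹ ≤ 1 := inv_le_one_of_one_le₀ (by nlinarith [sq_nonneg p.2])
    calc C * ((1 + ξ ^ 2)⁻¹ * (1 + p.2 ^ 2)⁻¹) ≤ C * ((1 + ξ ^ 2)⁻¹ * 1) := by gcongr
      _ = _ := by ring

theorem continuous_partialInv_right (hh : Nice h) (x : ℝ) : Continuous (partialInv h x) := by
  have h1 := hh.continuous_partialInv
  have h2 : Continuous fun η : ℝ => ((x, η) : ℝ × ℝ) := by fun_prop
  exact Continuous.comp (g := fun p : ℝ × ℝ => partialInv h p.1 p.2)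
    (f := fun η : ℝ => ((x, η) : ℝ × ℝ)) h1 h2

theorem partialInv_memLp (hh : Nice h) (x : ℝ) :
    Integrable (partialInv h x) ∧ MemLp (partialInv h x) 2 := by
  obtain ⟨C, hC⟩ := hh.bound
  refine memLp_two_of_bound (C := ∫ ξ : ℝ, C * (1 + ξ ^ 2)⁻¹)
    (hh.continuous_partialInv_right x) fun η => ?_
  rw [partialInv_eq, ← integral_mul_const]
  refine norm_integral_le_of_norm_le ((integrable_inv_one_add_sq.const_mul C).mul_const _)
    (Eventually.of_forall fun ξ => ?_)
  rw [norm_mul, norm_char, one_mul]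
  exact (hC _).trans (le_of_eq (by ring))

theorem continuous_ftInv (hh : Nice h) : Continuous (ftInv h) := by
  have hc := hh.cont
  unfold ftInv
  refine continuous_of_dominated (bound := fun ξ => ‖h ξ‖) (fun p => ?_)
    (fun p => Eventually.of_forall fun ξ => ?_) hh.integrable.norm
    (Eventually.of_forall fun ξ => by fun_prop)
  · exact Continuous.aestronglyMeasurable (by fun_prop)
  · rw [norm_mul, norm_char₂, one_mul]

theorem ftInv_eq_iterated (hh : Nice h) (x y : ℝ) : ftInv h (x, y) = 𝓕⁻ (partialInv h x) y := by
  have hc := hh.cont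
  have hi : Integrable (fun ξ : ℝ × ℝ =>
      Complex.exp (2 * Real.pi * (x * ξ.1 + y * ξ.2) * Complex.I) * h ξ) := by
    refine hh.integrable.norm.mono' (Continuous.aestronglyMeasurable (by fun_prop))
      (Eventually.of_forall fun ξ => ?_)
    rw [norm_mul, norm_char₂, one_mul]
  rw [Real.fourierInv_eq']
  unfold ftInv
  rw [Measure.volume_eq_prod, integral_prod_symm _ hi]
  congr 1
  ext η
  rw [partialInv_eq, smul_eq_mul, ← integral_const_mul]
  congr 1
  ext ξ
  rw [← mul_assoc, ← Complex.exp_add]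
  congr 2
  simp only [RCLike.inner_apply, conj_trivial]
  push_cast
  ring

/-- Plancherel in `y` at fixed `x`. -/
theorem lintegral_ftInv_y (hh : Nice h) (x : ℝ) :
    ∫⁻ y, ‖ftInv h (x, y)‖ₑ ^ 2 = ∫⁻ η, ‖partialInv h x η‖ₑ ^ 2 := by
  simp_rw [hh.ftInv_eq_iterated]
  exact plancherel_inv _ (hh.partialInv_memLp x).1 (hh.partialInv_memLp x).2

/-- Plancherel in `x`, integrated over `η`. -/
theorem lintegral_partialInv (hh : Nice h) :
    ∫⁻ x, ∫⁻ η, ‖partialInv h x η‖ₑ ^ 2 = energy h := by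
  have hc := hh.cont
  have hp := hh.continuous_partialInv
  rw [lintegral_lintegral_swap (by exact ((ENNReal.continuous_pow 2).comp hp.enorm).aemeasurable), energy,
    Measure.volume_eq_prod, lintegral_prod_symm _ (by fun_prop)]
  congr 1
  ext η
  exact plancherel_inv _ (hh.slice η).1 (hh.slice η).2

theorem lintegral_ftInv (hh : Nice h) : ∫⁻ p, ‖ftInv h p‖ₑ ^ 2 = energy h := by
  have hc := hh.continuous_ftInv
  rw [← hh.lintegral_partialInv, Measure.volume_eq_prod, lintegral_prod _ (by fun_prop)]
  simp_rw [hh.lintegral_ftInv_y]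

/-- Bernstein in `x`, i.e. the bound for `L^∞_x L²_y`, when `h` lives in `|ξ| ≤ R`. -/
theorem lintegral_partialInv_le (hh : Nice h) {R : ℝ} (hR : ∀ p : ℝ × ℝ, R < |p.1| → h p = 0)
    (x : ℝ) : ∫⁻ η, ‖partialInv h x η‖ₑ ^ 2 ≤ ENNReal.ofReal (2 * R) * energy h := by
  have hc := hh.cont
  rw [energy, Measure.volume_eq_prod, lintegral_prod_symm _ (by fun_prop),
    ← lintegral_const_mul' _ _ ENNReal.ofReal_ne_top]
  refine lintegral_mono fun η => ?_
  refine le_trans ?_ (sq_lintegral_le (g := fun ξ => h (ξ, η)) (by fun_prop) (R := R)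
    fun t ht => hR (t, η) ht)
  gcongr
  rw [partialInv_eq]
  refine (enorm_integral_le_lintegral_enorm _).trans (le_of_eq ?_)
  congr 1
  ext ξ
  rw [enorm_mul, ← ofReal_norm, norm_char]
  simp

/-- Bernstein in `y` at fixed `x`, when `h` lives in `|η| ≤ R`; integrated over `x` it is the
bound for `L²_x L^∞_y`. -/
theorem ftInv_sq_le (hh : Nice h) {R : ℝ} (hR : ∀ p : ℝ × ℝ, R < |p.2| → h p = 0) (x y : ℝ) :
    ‖ftInv h (x, y)‖ₑ ^ 2 ≤ ENNReal.ofReal (2 * R) * ∫⁻ η, ‖partialInv h x η‖ₑ ^ 2 := by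
  refine le_trans ?_ (sq_lintegral_le (g := partialInv h x)
    (hh.continuous_partialInv_right x) (R := R) fun η hη => ?_)
  · gcongr
    rw [hh.ftInv_eq_iterated, Real.fourierInv_eq']
    refine (enorm_integral_le_lintegral_enorm _).trans (le_of_eq ?_)
    congr 1
    ext ξ
    rw [enorm_smul, ← ofReal_norm, Complex.norm_exp_ofReal_mul_I]
    simp
  · rw [partialInv_eq]
    simp [fun ξ => hR (ξ, η) hη]

end Nice

/-! ### Summation of quadrilinear forms with off-diagonal decay -/

/-- The `ℓ¹` distance on the frequency lattice `ℤ²`. -/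
noncomputable def dist₁ (v w : ℤ × ℤ) : ℝ := |((v.1 - w.1 : ℤ) : ℝ)| + |((v.2 - w.2 : ℤ) : ℝ)|

/-- The kernel `2^{-|v - w|/12}` with the `ℓ¹` distance. The exponent makes `kern v w ^ 4` the
decay `2^{-|v - w|/3}` of a bilinear estimate. -/
noncomputable def kern (v w : ℤ × ℤ) : ℝ≥0∞ := (2 : ℝ≥0∞) ^ (-dist₁ v w / 12)

/-- The `ℓ¹` norm of the convolution kernel `kern`. -/
noncomputable def kernMass : ℝ≥0∞ := ∑' w : ℤ × ℤ, kern w 0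

theorem kern_comm (v w : ℤ × ℤ) : kern v w = kern w v := by
  have h1 := abs_sub_comm (v.1 : ℝ) w.1
  have h2 := abs_sub_comm (v.2 : ℝ) w.2
  simp [kern, dist₁, h1, h2]

theorem kern_le_one (v w : ℤ × ℤ) : kern v w ≤ 1 := by
  have h : 0 ≤ dist₁ v w := by unfold dist₁; positivity
  unfold kern
  simpa using ENNReal.rpow_le_rpow_of_exponent_le (x := 2) (by norm_num)
    (by linarith : -dist₁ v w / 12 ≤ 0)

theorem tsum_kern (v : ℤ × ℤ) : ∑' w, kern v w = kernMass := by
  rw [kernMass, ← (Equiv.addRight v).tsum_eq]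
  refine tsum_congr fun w => ?_
  rw [kern_comm]
  simp [kern, dist₁]

theorem kernMass_ne_top : kernMass ≠ ⊤ := by
  have h : kernMass = (∑' k : ℤ, (2 : ℝ≥0∞) ^ (-|(k : ℝ)| / 12)) *
      ∑' k : ℤ, (2 : ℝ≥0∞) ^ (-|(k : ℝ)| / 12) := by
    rw [kernMass, ENNReal.tsum_prod (f := fun a b => kern (a, b) 0), ← ENNReal.tsum_mul_right]
    refine tsum_congr fun k => ?_
    rw [← ENNReal.tsum_mul_left]
    refine tsum_congr fun l => ?_
    rw [← ENNReal.rpow_add _ _ (by norm_num) (by norm_num), kern]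
    congr 1
    simp [dist₁]
    ring
  have h1 : ∑' k : ℤ, (2 : ℝ≥0∞) ^ (-|(k : ℝ)| / 12) ≠ ⊤ := by
    have hr : (2 : ℝ≥0∞) ^ (-1 / 12 : ℝ) < 1 :=
      ENNReal.rpow_lt_one_of_one_lt_of_neg (by norm_num) (by norm_num)
    have hg : ∑' n : ℕ, (2 : ℝ≥0∞) ^ (-(n : ℝ) / 12) ≠ ⊤ := by
      have : ∀ n : ℕ, (2 : ℝ≥0∞) ^ (-(n : ℝ) / 12) = ((2 : ℝ≥0∞) ^ (-1 / 12 : ℝ)) ^ n := by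
        intro n
        rw [← ENNReal.rpow_natCast, ← ENNReal.rpow_mul]
        congr 1; ring
      simp_rw [this]
      rw [ENNReal.tsum_geometric]
      exact ENNReal.inv_ne_top.2 (tsub_pos_of_lt hr).ne'
    have hsum := HasSum.of_nat_of_neg_add_one (f := fun k : ℤ => (2 : ℝ≥0∞) ^ (-|(k : ℝ)| / 12))
      ENNReal.summable.hasSum ENNReal.summable.hasSum
    rw [hsum.tsum_eq]
    refine ENNReal.add_ne_top.2 ⟨by simpa using hg, ne_top_of_le_ne_top hg ?_⟩
    refine ENNReal.tsum_le_tsum fun n => ?_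
    refine ENNReal.rpow_le_rpow_of_exponent_le (by norm_num) ?_
    have : |((-((n : ℤ) + 1) : ℤ) : ℝ)| = n + 1 := by
      push_cast
      rw [abs_neg, abs_of_nonneg (by positivity)]
    rw [this]
    linarith
  rw [h]
  exact ENNReal.mul_ne_top h1 h1

/-- The operator `u ↦ ∑_w kern v w · u_w`. -/
noncomputable def kernOp (u : ℤ × ℤ → ℝ≥0∞) (v : ℤ × ℤ) : ℝ≥0∞ := ∑' w, kern v w * u w

theorem kernOp_one (v : ℤ × ℤ) : kernOp (fun _ => 1) v = kernMass := by
  simp [kernOp, tsum_kern]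

theorem tsum_kernOp (u : ℤ × ℤ → ℝ≥0∞) : ∑' v, kernOp u v = kernMass * ∑' v, u v := by
  unfold kernOp
  rw [ENNReal.tsum_comm, ← ENNReal.tsum_mul_left]
  refine tsum_congr fun w => ?_
  rw [ENNReal.tsum_mul_right]
  simp_rw [kern_comm _ w, tsum_kern]

theorem kernOp_mul_const (u : ℤ × ℤ → ℝ≥0∞) (c : ℝ≥0∞) (v : ℤ × ℤ) :
    kernOp (fun w => u w * c) v = kernOp u v * c := by
  simp [kernOp, ← ENNReal.tsum_mul_right, mul_assoc]

/-- Four-fold sums with decay along the tree `b - a - c - d` factor through `kernOp`. -/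
theorem tree_sum (u₁ u₂ u₃ u₄ : ℤ × ℤ → ℝ≥0∞) :
    ∑' a, ∑' b, ∑' c, ∑' d, (kern a b * kern a c * kern c d) * (u₁ a * u₂ b * u₃ c * u₄ d) =
      ∑' a, u₁ a * kernOp u₂ a * kernOp (fun c => u₃ c * kernOp u₄ c) a := by
  refine tsum_congr fun a => ?_
  have h : ∀ b c d, (kern a b * kern a c * kern c d) * (u₁ a * u₂ b * u₃ c * u₄ d) =
      u₁ a * ((kern a b * u₂ b) * ((kern a c * u₃ c) * (kern c d * u₄ d))) := by
    intros; ring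
  simp_rw [h, ENNReal.tsum_mul_left, ENNReal.tsum_mul_right, kernOp, mul_assoc]

/-- With a single lattice function, the decay along the tree sums out the other three indices. -/
theorem tree_sum_eq (β : ℤ × ℤ → ℝ≥0∞) :
    ∑' a, ∑' b, ∑' c, ∑' d, (kern a b * kern a c * kern c d) * (β a + β b + β c + β d) =
      4 * kernMass ^ 3 * ∑' v, β v := by
  have hD : ∀ a, kernOp (fun _ => kernMass) a = kernMass * kernMass := fun a => by
    simpa [kernOp_one] using kernOp_mul_const (fun _ => 1) kernMass a
  have h5 : ∑' a, kernOp (fun c => kernOp β c) a = kernMass * (kernMass * ∑' v, β v) := by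
    rw [tsum_kernOp, tsum_kernOp]
  have h1 : ∑' a, ∑' b, ∑' c, ∑' d, (kern a b * kern a c * kern c d) * β a =
      kernMass ^ 3 * ∑' v, β v := by
    have h := tree_sum β (fun _ => 1) (fun _ => 1) (fun _ => 1)
    simp only [mul_one, one_mul] at h
    rw [h]
    simp only [kernOp_one, hD, ENNReal.tsum_mul_right]
    ring
  have h2 : ∑' a, ∑' b, ∑' c, ∑' d, (kern a b * kern a c * kern c d) * β b =
      kernMass ^ 3 * ∑' v, β v := by
    have h := tree_sum (fun _ => 1) β (fun _ => 1) (fun _ => 1)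
    simp only [mul_one, one_mul] at h
    rw [h]
    simp only [kernOp_one, hD, ENNReal.tsum_mul_right, tsum_kernOp]
    ring
  have h3 : ∑' a, ∑' b, ∑' c, ∑' d, (kern a b * kern a c * kern c d) * β c =
      kernMass ^ 3 * ∑' v, β v := by
    have h := tree_sum (fun _ => 1) (fun _ => 1) β (fun _ => 1)
    simp only [mul_one, one_mul] at h
    rw [h]
    simp only [kernOp_one, kernOp_mul_const, ENNReal.tsum_mul_right, ENNReal.tsum_mul_left, tsum_kernOp]
    ring
  have h4 : ∑' a, ∑' b, ∑' c, ∑' d, (kern a b * kern a c * kern c d) * β d =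
      kernMass ^ 3 * ∑' v, β v := by
    have h := tree_sum (fun _ => 1) (fun _ => 1) (fun _ => 1) β
    simp only [mul_one, one_mul] at h
    rw [h]
    simp only [kernOp_one, ENNReal.tsum_mul_left, h5]
    ring
  simp_rw [mul_add, ENNReal.tsum_add, h1, h2, h3, h4]
  ring

/-- The embedding `ℓ¹ ⊆ ℓ^p`. -/
theorem tsum_rpow_le (α : ℤ × ℤ → ℝ≥0∞) {p : ℝ} (hp : 1 ≤ p) :
    ∑' v, α v ^ p ≤ (∑' v, α v) ^ p := by
  have h : ∀ x : ℝ≥0∞, x ^ p = x * x ^ (p - 1) := fun x => by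
    nth_rewrite 2 [← ENNReal.rpow_one x]
    rw [← ENNReal.rpow_add_of_nonneg _ _ (by norm_num) (by linarith)]
    congr 1; ring
  simp_rw [h]
  rw [← ENNReal.tsum_mul_right]
  refine ENNReal.tsum_le_tsum fun v => ?_
  exact mul_le_mul_right (ENNReal.rpow_le_rpow (ENNReal.le_tsum v) (by linarith)) _

/-- The geometric mean of the two bounds, with weights `1/3` and `2/3`. -/
theorem interpolate {P S m c t : ℝ≥0∞} (h1 : P ≤ S ^ 2 * m) (h2 : P ≤ c * m ^ 2 * t) :
    P ≤ (c ^ (2 / 3 : ℝ) * S ^ (2 / 3 : ℝ) * m ^ (5 / 3 : ℝ)) * t ^ (2 / 3 : ℝ) := by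
  calc P = P ^ (1 / 3 : ℝ) * P ^ (2 / 3 : ℝ) := by
        rw [← ENNReal.rpow_add_of_nonneg _ _ (by norm_num) (by norm_num)]; norm_num
    _ ≤ (S ^ 2 * m) ^ (1 / 3 : ℝ) * (c * m ^ 2 * t) ^ (2 / 3 : ℝ) := by gcongr
    _ = (c ^ (2 / 3 : ℝ) * S ^ (2 / 3 : ℝ) * (m ^ (1 / 3 : ℝ) * m ^ (4 / 3 : ℝ))) *
        t ^ (2 / 3 : ℝ) := by
      simp_rw [← ENNReal.rpow_natCast]
      rw [ENNReal.mul_rpow_of_nonneg _ _ (by norm_num), ENNReal.mul_rpow_of_nonneg _ _ (by norm_num),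
        ENNReal.mul_rpow_of_nonneg _ _ (by norm_num), ← ENNReal.rpow_mul, ← ENNReal.rpow_mul]
      norm_num
      ring
    _ = _ := by
      rw [← ENNReal.rpow_add_of_nonneg _ _ (by norm_num) (by norm_num)]; norm_num

theorem lintegral_sq_le {X : Type*} [MeasurableSpace X] {μ : Measure X} {f g : X → ℝ≥0∞}
    (hf : Measurable f) (hg : Measurable g) :
    (∫⁻ x, f x * g x ∂μ) ^ 2 ≤ (∫⁻ x, f x ^ 2 ∂μ) * ∫⁻ x, g x ^ 2 ∂μ := by
  have h := ENNReal.lintegral_mul_le_Lp_mul_Lq μ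
    (p := 2) (q := 2) (by norm_num [Real.holderConjugate_iff]) hf.aemeasurable hg.aemeasurable
  simp only [Pi.mul_apply] at h
  calc _ ≤ _ := pow_le_pow_left₀ (by positivity) h 2
    _ ≤ _ := by
      rw [mul_pow, ← ENNReal.rpow_natCast, ← ENNReal.rpow_natCast, ← ENNReal.rpow_mul,
        ← ENNReal.rpow_mul]
      norm_num

/-- The quartic bound from three families of bilinear estimates. Each of `h1`, `h2`, `h3` holds for
all ordered pairs, so exchanging `v` and `w` reverses the sign of the exponent; choosing among the
resulting estimates makes the exponent at most `0` in `h1` and equal to `-|v - w|/2` for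
`h2`, `h3`. -/
theorem quartic_sum_le {X : Type*} [MeasurableSpace X] {μ : Measure X} {q : ℤ × ℤ → X → ℝ≥0∞}
    (hq : ∀ v, Measurable (q v)) {α : ℤ × ℤ → ℝ≥0∞} {S c : ℝ≥0∞}
    (h1 : ∀ v w, ∫⁻ x, (q v x * q w x) ^ 2 ∂μ ≤
      S ^ 2 * α w * 2 ^ (((v.1 - w.1 : ℤ) + (v.2 - w.2 : ℤ) : ℝ) / 2))
    (h2 : ∀ v w, ∫⁻ x, (q v x * q w x) ^ 2 ∂μ ≤
      c * (α v * α w) * 2 ^ (((v.1 - w.1 : ℤ) + (v.2 - w.2 : ℤ) : ℝ) / 2))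
    (h3 : ∀ v w, ∫⁻ x, (q v x * q w x) ^ 2 ∂μ ≤
      c * (α v * α w) * 2 ^ (((v.1 - w.1 : ℤ) - (v.2 - w.2 : ℤ) : ℝ) / 2)) :
    ∫⁻ x, (∑' v, q v x) ^ 4 ∂μ ≤
      4 * kernMass ^ 3 * (c ^ (2 / 3 : ℝ) * S ^ (2 / 3 : ℝ)) * (∑' v, α v) ^ (5 / 3 : ℝ) := by
  have hsymm : ∀ v w, ∫⁻ x, (q v x * q w x) ^ 2 ∂μ = ∫⁻ x, (q w x * q v x) ^ 2 ∂μ := fun v w => by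
    simp_rw [mul_comm]
  have two_le_one : ∀ {t : ℝ}, t ≤ 0 → (2 : ℝ≥0∞) ^ t ≤ 1 := fun {t} ht => by
    simpa using ENNReal.rpow_le_rpow_of_exponent_le (x := 2) (by norm_num) ht
  set K : ℝ≥0∞ := c ^ (2 / 3 : ℝ) * S ^ (2 / 3 : ℝ) with hK
  -- `hA` and `hB` are the two endpoints of the interpolation: no decay but a power of `S`, and
  -- full decay without `S`. The order of `v` and `w` is the one making the exponent nonpositive.
  have pair : ∀ v w m, α v ≤ m → α w ≤ m →
      ∫⁻ x, (q v x * q w x) ^ 2 ∂μ ≤ K * m ^ (5 / 3 : ℝ) * kern v w ^ 4 := by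
    intro v w m hv hw
    have hA : ∫⁻ x, (q v x * q w x) ^ 2 ∂μ ≤ S ^ 2 * m := by
      rcases le_total (((v.1 - w.1 : ℤ) + (v.2 - w.2 : ℤ) : ℝ)) 0 with h | h
      · refine (h1 v w).trans ?_
        calc _ ≤ S ^ 2 * m * 1 := by
              gcongr
              exact two_le_one (by linarith)
          _ = _ := mul_one _
      · rw [hsymm]
        refine (h1 w v).trans ?_
        calc _ ≤ S ^ 2 * m * 1 := by
              gcongr
              refine two_le_one ?_
              push_cast at h ⊢
              linarith
          _ = _ := mul_one _
    have hB : ∫⁻ x, (q v x * q w x) ^ 2 ∂μ ≤ c * m ^ 2 * 2 ^ (-dist₁ v w / 2) := by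
      have key : ∀ t, ∫⁻ x, (q v x * q w x) ^ 2 ∂μ ≤ c * (α v * α w) * 2 ^ (t / 2) →
          t = -dist₁ v w → ∫⁻ x, (q v x * q w x) ^ 2 ∂μ ≤ c * m ^ 2 * 2 ^ (-dist₁ v w / 2) := by
        intro t ht hd
        rw [hd] at ht
        refine ht.trans ?_
        rw [sq]
        gcongr
      have h2' := h2 w v
      have h3' := h3 w v
      rw [← hsymm, mul_comm (α w)] at h2' h3'
      unfold dist₁ at key ⊢
      rcases abs_cases ((v.1 - w.1 : ℤ) : ℝ) with ⟨e1, _⟩ | ⟨e1, _⟩ <;>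
      rcases abs_cases ((v.2 - w.2 : ℤ) : ℝ) with ⟨e2, _⟩ | ⟨e2, _⟩
      · refine key _ h2' ?_
        rw [e1, e2]; push_cast; ring
      · refine key _ h3' ?_
        rw [e1, e2]; push_cast; ring
      · refine key _ (h3 v w) ?_
        rw [e1, e2]; push_cast; ring
      · refine key _ (h2 v w) ?_
        rw [e1, e2]; push_cast; ring
    have := interpolate hA hB
    rw [← ENNReal.rpow_mul] at this
    refine this.trans (le_of_eq ?_)
    rw [kern, ← ENNReal.rpow_natCast, ← ENNReal.rpow_mul]
    congr 2
    push_cast; ring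
  have quad : ∀ a b c d, ∫⁻ x, q a x * (q b x * (q c x * q d x)) ∂μ ≤
      K * ((kern a b * kern a c * kern c d) * (α a ^ (5 / 3 : ℝ) + α b ^ (5 / 3 : ℝ) +
        α c ^ (5 / 3 : ℝ) + α d ^ (5 / 3 : ℝ))) := by
    intro a b c d
    set T := ∫⁻ x, q a x * (q b x * (q c x * q d x)) ∂μ with hT
    set m := max (max (α a) (α b)) (max (α c) (α d)) with hm
    have ha : α a ≤ m := by simp [hm]
    have hb : α b ≤ m := by simp [hm]
    have hc : α c ≤ m := by simp [hm]
    have hd : α d ≤ m := by simp [hm]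
    -- The pairing `ab|cd` gives two edges of the tree, and `ac|bd` the third one.
    have hT1 : T ^ 2 ≤ (K * m ^ (5 / 3 : ℝ) * kern a b ^ 4) * (K * m ^ (5 / 3 : ℝ) * kern c d ^ 4) := by
      refine le_trans ?_ (mul_le_mul' (pair a b m ha hb) (pair c d m hc hd))
      refine le_trans (le_of_eq ?_)
        (lintegral_sq_le ((hq a).mul (hq b)) ((hq c).mul (hq d)))
      simp only [hT, mul_assoc]
    have hT2 : T ^ 2 ≤ (K * m ^ (5 / 3 : ℝ) * kern a c ^ 4) * (K * m ^ (5 / 3 : ℝ) * 1) := by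
      refine le_trans ?_ (mul_le_mul' (pair a c m ha hc) ((pair b d m hb hd).trans
        (mul_le_mul_right (pow_le_one₀ (by positivity) (kern_le_one b d)) _)))
      refine le_trans (le_of_eq ?_)
        (lintegral_sq_le ((hq a).mul (hq c)) ((hq b).mul (hq d)))
      simp only [hT]
      congr 1
      refine lintegral_congr fun x => ?_
      ring
    have hT4 : T ^ 4 ≤ (K * ((kern a b * kern a c * kern c d) * m ^ (5 / 3 : ℝ))) ^ 4 := by
      calc T ^ 4 = T ^ 2 * T ^ 2 := by ring
        _ ≤ _ := mul_le_mul' hT1 hT2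
        _ = _ := by ring
    refine ((ENNReal.pow_le_pow_left_iff (by norm_num)).1 hT4).trans ?_
    gcongr
    rw [hm]
    rcases max_choice (max (α a) (α b)) (max (α c) (α d)) with h | h <;> rw [h]
    · rcases max_choice (α a) (α b) with h | h <;> rw [h]
      · exact le_add_right (le_add_right (le_add_right le_rfl))
      · exact le_add_right (le_add_right (le_add_left le_rfl))
    · rcases max_choice (α c) (α d) with h | h <;> rw [h]
      · exact le_add_right (le_add_left le_rfl)
      · exact le_add_left le_rfl
  have expand : ∀ x, (∑' v, q v x) ^ 4 =
      ∑' a, ∑' b, ∑' c, ∑' d, q a x * (q b x * (q c x * q d x)) := by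
    intro x
    simp_rw [ENNReal.tsum_mul_left, ENNReal.tsum_mul_right]
    ring
  simp_rw [expand]
  have meas : ∀ a b c d, Measurable fun x => q a x * (q b x * (q c x * q d x)) := fun a b c d =>
    (hq a).mul ((hq b).mul ((hq c).mul (hq d)))
  have e1 : ∫⁻ x, ∑' a, ∑' b, ∑' c, ∑' d, q a x * (q b x * (q c x * q d x)) ∂μ =
      ∑' a, ∑' b, ∑' c, ∑' d, ∫⁻ x, q a x * (q b x * (q c x * q d x)) ∂μ := by
    rw [lintegral_tsum fun a => (Measurable.tsum fun b => .tsum fun c =>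
      .tsum fun d => meas a b c d).aemeasurable]
    refine tsum_congr fun a => ?_
    rw [lintegral_tsum fun b => (Measurable.tsum fun c => .tsum fun d => meas a b c d).aemeasurable]
    refine tsum_congr fun b => ?_
    rw [lintegral_tsum fun c => (Measurable.tsum fun d => meas a b c d).aemeasurable]
    refine tsum_congr fun c => ?_
    rw [lintegral_tsum fun d => (meas a b c d).aemeasurable]
  rw [e1]
  calc _ ≤ ∑' a, ∑' b, ∑' c, ∑' d, K * ((kern a b * kern a c * kern c d) * (α a ^ (5 / 3 : ℝ) +
          α b ^ (5 / 3 : ℝ) + α c ^ (5 / 3 : ℝ) + α d ^ (5 / 3 : ℝ))) :=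
        ENNReal.tsum_le_tsum fun a => ENNReal.tsum_le_tsum fun b => ENNReal.tsum_le_tsum fun c =>
          ENNReal.tsum_le_tsum fun d => quad a b c d
    _ = K * (4 * kernMass ^ 3 * ∑' v, α v ^ (5 / 3 : ℝ)) := by
        simp_rw [ENNReal.tsum_mul_left]
        rw [tree_sum_eq fun v => α v ^ (5 / 3 : ℝ)]
    _ ≤ K * (4 * kernMass ^ 3 * (∑' v, α v) ^ (5 / 3 : ℝ)) := by
        gcongr
        exact tsum_rpow_le α (by norm_num)
    _ = _ := by ring

/-! ### Littlewood–Paley pieces -/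

/-- The Littlewood–Paley function `ψ`. -/
noncomputable def psi (φ₀ : ℝ → ℝ) (t : ℝ) : ℝ := φ₀ t - φ₀ (2 * t)

/-- The Fourier transform of `Q_{M,N} f` for `M = 2^k`, `N = 2^l` and `v = (k, l)`. -/
noncomputable def piece (φ₀ : ℝ → ℝ) (f : ℝ × ℝ → ℂ) (v : ℤ × ℤ) : ℝ × ℝ → ℂ := fun p =>
  ((psi φ₀ (((2 : ℝ) ^ v.1)⁻¹ * p.1) * psi φ₀ (((2 : ℝ) ^ v.2)⁻¹ * p.2) : ℝ) : ℂ) * ft f p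

/-- The Fourier transform of `|∂ₓ|^{1/4} |∂_y|^{1/4} f`. -/
noncomputable def sob (f : ℝ × ℝ → ℂ) : ℝ × ℝ → ℂ := fun p =>
  ((|p.1| ^ ((1 / 2 : ℝ) / 2) * |p.2| ^ ((1 / 2 : ℝ) / 2) : ℝ) : ℂ) * ft f p

theorem QMN_eq (φ₀ : ℝ → ℝ) (f : ℝ × ℝ → ℂ) (k l : ℤ) :
    QMN φ₀ ((2 : ℝ) ^ k) ((2 : ℝ) ^ l) f = ftInv (piece φ₀ f (k, l)) := rfl

theorem anisoDeriv_eq (f : ℝ × ℝ → ℂ) : anisoDeriv (1 / 2) f = ftInv (sob f) := rfl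

theorem ofReal_two_zpow (k : ℤ) : ENNReal.ofReal ((2 : ℝ) ^ k) = (2 : ℝ≥0∞) ^ (k : ℝ) := by
  rw [← Real.rpow_intCast, ← ENNReal.ofReal_rpow_of_pos (by norm_num)]
  norm_num

theorem IsBump.bounded {φ₀ : ℝ → ℝ} (hφ : IsBump φ₀) : ∃ B : ℝ, 0 ≤ B ∧ ∀ t, |φ₀ t| ≤ B := by
  have hc : HasCompactSupport φ₀ := HasCompactSupport.of_support_subset_isCompact
    (isCompact_Icc (a := (-2 : ℝ)) (b := 2)) fun t ht => by
      by_contra hn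
      refine ht (hφ.2.2 t ?_)
      by_contra! hlt
      exact hn (abs_le.1 hlt.le)
  obtain ⟨B, hB⟩ := hc.exists_bound_of_continuous hφ.1.continuous
  exact ⟨B, (norm_nonneg _).trans (hB 0), hB⟩

theorem psi_zero_of_small {φ₀ : ℝ → ℝ} (hφ : IsBump φ₀) {t : ℝ} (ht : |t| ≤ 1 / 2) :
    psi φ₀ t = 0 := by
  rw [psi, hφ.2.1 t (by linarith), hφ.2.1 (2 * t) (by rw [abs_mul]; norm_num; linarith), sub_self]

theorem psi_zero_of_large {φ₀ : ℝ → ℝ} (hφ : IsBump φ₀) {t : ℝ} (ht : 2 ≤ |t|) :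
    psi φ₀ t = 0 := by
  rw [psi, hφ.2.2 t ht, hφ.2.2 (2 * t) (by rw [abs_mul]; norm_num; linarith), sub_self]

theorem psi_bound {φ₀ : ℝ → ℝ} {B : ℝ} (hB : ∀ t, |φ₀ t| ≤ B) (t : ℝ) : |psi φ₀ t| ≤ 2 * B := by
  have := abs_sub (φ₀ t) (φ₀ (2 * t))
  have h1 := hB t
  have h2 := hB (2 * t)
  unfold psi
  linarith

theorem abs_scale (k : ℤ) (t : ℝ) : |((2 : ℝ) ^ k)⁻¹ * t| = |t| / (2 : ℝ) ^ k := by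
  rw [abs_mul, abs_inv, abs_of_pos (zpow_pos (by norm_num) k)]
  ring

theorem psi_support {φ₀ : ℝ → ℝ} (hφ : IsBump φ₀) {k : ℤ} {t : ℝ}
    (h : psi φ₀ (((2 : ℝ) ^ k)⁻¹ * t) ≠ 0) : |t| / 2 < 2 ^ k ∧ 2 ^ k < 2 * |t| := by
  have hk : (0 : ℝ) < 2 ^ k := zpow_pos (by norm_num) k
  constructor
  · by_contra! hc
    refine h (psi_zero_of_large hφ ?_)
    rw [abs_scale, le_div_iff₀ hk]
    linarith
  · by_contra! hc
    refine h (psi_zero_of_small hφ ?_)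
    rw [abs_scale, div_le_iff₀ hk]
    linarith

/-- At most three dyadic frequencies `2^k` see a given `t`, and they are comparable to `|t|`. -/
theorem lp_sum_le {φ₀ : ℝ → ℝ} (hφ : IsBump φ₀) {B : ℝ} (hB : ∀ t, |φ₀ t| ≤ B)
    (t : ℝ) : ∑' k : ℤ, (2 : ℝ≥0∞) ^ ((k : ℝ) / 2) * ‖psi φ₀ (((2 : ℝ) ^ k)⁻¹ * t)‖ₑ ^ 2 ≤
      ENNReal.ofReal (24 * B ^ 2) * ENNReal.ofReal (|t| ^ (1 / 2 : ℝ)) := by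
  rcases eq_or_ne t 0 with rfl | ht
  · have : psi φ₀ 0 = 0 := psi_zero_of_small hφ (by norm_num)
    simp [this]
  have ht' : 0 < |t| := abs_pos.2 ht
  obtain ⟨j, hj1, hj2⟩ := exists_mem_Ico_zpow ht' (by norm_num : (1 : ℝ) < 2)
  have hterm : ∀ k : ℤ, (2 : ℝ≥0∞) ^ ((k : ℝ) / 2) * ‖psi φ₀ (((2 : ℝ) ^ k)⁻¹ * t)‖ₑ ^ 2 ≤
      ENNReal.ofReal (8 * B ^ 2) * ENNReal.ofReal (|t| ^ (1 / 2 : ℝ)) := by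
    intro k
    by_cases h0 : psi φ₀ (((2 : ℝ) ^ k)⁻¹ * t) = 0
    · simp [h0]
    have hk := (psi_support hφ h0).2
    have e1 : (2 : ℝ≥0∞) ^ ((k : ℝ) / 2) = ENNReal.ofReal (((2 : ℝ) ^ k) ^ (1 / 2 : ℝ)) := by
      rw [← ENNReal.ofReal_rpow_of_nonneg (by positivity) (by norm_num), ofReal_two_zpow,
        ← ENNReal.rpow_mul]
      congr 1; ring
    rw [e1, ← ofReal_norm, ← ENNReal.ofReal_pow (norm_nonneg _), ← ENNReal.ofReal_mul (by positivity),
      ← ENNReal.ofReal_mul (by positivity)]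
    refine ENNReal.ofReal_le_ofReal ?_
    have h2 : ((2 : ℝ) ^ k) ^ (1 / 2 : ℝ) ≤ 2 * |t| ^ (1 / 2 : ℝ) := by
      calc ((2 : ℝ) ^ k) ^ (1 / 2 : ℝ) ≤ (4 * |t|) ^ (1 / 2 : ℝ) := by
            gcongr
            linarith
        _ = 4 ^ (1 / 2 : ℝ) * |t| ^ (1 / 2 : ℝ) := Real.mul_rpow (by norm_num) (abs_nonneg _)
        _ = _ := by
            rw [show (4 : ℝ) = 2 ^ (2 : ℝ) by norm_num, ← Real.rpow_mul (by norm_num)]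
            norm_num
    have h3 : ‖psi φ₀ (((2 : ℝ) ^ k)⁻¹ * t)‖ ≤ 2 * B := psi_bound hB _
    calc _ ≤ (2 * |t| ^ (1 / 2 : ℝ)) * (2 * B) ^ 2 := by gcongr
      _ = _ := by ring
  have hsupp : ∀ k ∉ Finset.Icc (j - 1) (j + 1),
      (2 : ℝ≥0∞) ^ ((k : ℝ) / 2) * ‖psi φ₀ (((2 : ℝ) ^ k)⁻¹ * t)‖ₑ ^ 2 = 0 := by
    intro k hk
    by_cases h0 : psi φ₀ (((2 : ℝ) ^ k)⁻¹ * t) = 0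
    · simp [h0]
    exfalso
    obtain ⟨h1, h2⟩ := psi_support hφ h0
    refine hk (Finset.mem_Icc.2 ⟨?_, ?_⟩)
    · have : (2 : ℝ) ^ (j - 1) < 2 ^ k := by
        rw [zpow_sub_one₀ (by norm_num)]
        linarith
      exact ((zpow_lt_zpow_iff_right₀ (by norm_num)).1 this).le
    · have : (2 : ℝ) ^ k < 2 ^ (j + 2) := by
        rw [show j + 2 = (j + 1) + 1 by ring, zpow_add_one₀ (by norm_num) (j + 1)]
        linarith
      have := (zpow_lt_zpow_iff_right₀ (by norm_num : (1 : ℝ) < 2)).1 this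
      linarith
  rw [tsum_eq_sum hsupp]
  refine (Finset.sum_le_card_nsmul _ _ _ fun k _ => hterm k).trans (le_of_eq ?_)
  rw [Int.card_Icc, show j + 1 + 1 - (j - 1) = 3 by ring, nsmul_eq_mul, ← mul_assoc,
    show (24 * B ^ 2 : ℝ) = 3 * (8 * B ^ 2) by ring, ENNReal.ofReal_mul (by norm_num),
    show (Int.toNat 3) = 3 from rfl]
  norm_num

/-- A multiplier of at most quadratic growth in each variable keeps `f̂` in the class `Nice`. -/
theorem nice_mul_ft {f : ℝ × ℝ → ℂ} (hf : ContDiff ℝ (⊤ : ℕ∞) f) (hc : HasCompactSupport f)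
    {m : ℝ × ℝ → ℝ} (hm : Continuous m) {D : ℝ}
    (hD : ∀ p : ℝ × ℝ, |m p| ≤ D * ((1 + p.1 ^ 2) * (1 + p.2 ^ 2))) :
    Nice fun p => (m p : ℂ) * ft f p := by
  obtain ⟨h1, ⟨C, hC⟩, -⟩ := ft_props f hf hc
  have hD0 : 0 ≤ D := by have := (abs_nonneg _).trans (hD 0); simpa using this
  refine ⟨by fun_prop, D * C, fun p => ?_⟩
  rw [norm_mul, Complex.norm_real, Real.norm_eq_abs]
  have hp1 : (0 : ℝ) < 1 + p.1 ^ 2 := by positivity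
  have hp2 : (0 : ℝ) < 1 + p.2 ^ 2 := by positivity
  rw [← mul_inv, ← div_eq_mul_inv, le_div_iff₀ (by positivity)]
  calc |m p| * ‖ft f p‖ * ((1 + p.1 ^ 2) * (1 + p.2 ^ 2))
      ≤ (D * ((1 + p.1 ^ 2) * (1 + p.2 ^ 2))) * ‖ft f p‖ * ((1 + p.1 ^ 2) * (1 + p.2 ^ 2)) := by
        gcongr
        exact hD p
    _ = D * ((1 + p.1 ^ 2) ^ 2 * (1 + p.2 ^ 2) ^ 2 * ‖ft f p‖) := by ring
    _ ≤ D * C := by gcongr; exact hC p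

theorem continuous_psi {φ₀ : ℝ → ℝ} (hφ : IsBump φ₀) : Continuous (psi φ₀) := by
  have := hφ.1.continuous
  unfold psi
  fun_prop

theorem nice_piece {φ₀ : ℝ → ℝ} (hφ : IsBump φ₀) {f : ℝ × ℝ → ℂ} (hf : ContDiff ℝ (⊤ : ℕ∞) f)
    (hc : HasCompactSupport f) (v : ℤ × ℤ) : Nice (piece φ₀ f v) := by
  obtain ⟨B, hB0, hB⟩ := hφ.bounded
  have := continuous_psi hφ
  refine nice_mul_ft hf hc (D := (2 * B) * (2 * B)) (by fun_prop) fun p => ?_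
  rw [abs_mul]
  have h1 : (1 : ℝ) ≤ (1 + p.1 ^ 2) * (1 + p.2 ^ 2) := by
    nlinarith [sq_nonneg p.1, sq_nonneg p.2, mul_nonneg (sq_nonneg p.1) (sq_nonneg p.2)]
  calc _ ≤ (2 * B) * (2 * B) := by
        gcongr
        · exact psi_bound hB _
        · exact psi_bound hB _
    _ ≤ _ := le_mul_of_one_le_right (by positivity) h1

theorem nice_sob {f : ℝ × ℝ → ℂ} (hf : ContDiff ℝ (⊤ : ℕ∞) f) (hc : HasCompactSupport f) :
    Nice (sob f) := by
  have key : ∀ t : ℝ, |t| ^ ((1 / 2 : ℝ) / 2) ≤ 1 + t ^ 2 := by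
    intro t
    rcases le_total |t| 1 with h | h
    · have := Real.rpow_le_one (abs_nonneg t) h (by norm_num : (0 : ℝ) ≤ (1 / 2) / 2)
      nlinarith [sq_nonneg t]
    · have := Real.rpow_le_rpow_of_exponent_le h (by norm_num : ((1 / 2) / 2 : ℝ) ≤ (2 : ℕ))
      rw [Real.rpow_natCast, sq_abs] at this
      linarith
  refine nice_mul_ft hf hc (D := 1) ?_ fun p => ?_
  · exact (continuous_fst.abs.rpow_const fun _ => Or.inr (by norm_num)).mul
      (continuous_snd.abs.rpow_const fun _ => Or.inr (by norm_num))
  · rw [abs_of_nonneg (by positivity), one_mul]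
    gcongr
    · exact key _
    · exact key _

theorem piece_eq_zero_fst {φ₀ : ℝ → ℝ} (hφ : IsBump φ₀) (f : ℝ × ℝ → ℂ) (v : ℤ × ℤ) (p : ℝ × ℝ)
    (hp : 2 * (2 : ℝ) ^ v.1 < |p.1|) : piece φ₀ f v p = 0 := by
  have : psi φ₀ (((2 : ℝ) ^ v.1)⁻¹ * p.1) = 0 := by
    by_contra h
    have := (psi_support hφ h).1
    linarith
  simp [piece, this]

theorem piece_eq_zero_snd {φ₀ : ℝ → ℝ} (hφ : IsBump φ₀) (f : ℝ × ℝ → ℂ) (v : ℤ × ℤ) (p : ℝ × ℝ)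
    (hp : 2 * (2 : ℝ) ^ v.2 < |p.2|) : piece φ₀ f v p = 0 := by
  have : psi φ₀ (((2 : ℝ) ^ v.2)⁻¹ * p.2) = 0 := by
    by_contra h
    have := (psi_support hφ h).1
    linarith
  simp [piece, this]

/-- Almost orthogonality: the square function of the pieces is controlled by the norm of
`Ḣ_h^{1/2}`. -/
theorem tsum_energy_le {φ₀ : ℝ → ℝ} (hφ : IsBump φ₀) {B : ℝ}
    (hB : ∀ t, |φ₀ t| ≤ B) {f : ℝ × ℝ → ℂ} (hf : ContDiff ℝ (⊤ : ℕ∞) f)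
    (hc : HasCompactSupport f) :
    ∑' v : ℤ × ℤ, (2 : ℝ≥0∞) ^ (((v.1 : ℝ) + v.2) / 2) * energy (piece φ₀ f v) ≤
      ENNReal.ofReal (24 * B ^ 2) ^ 2 * energy (sob f) := by
  have hm : ∀ v, Measurable fun p => ‖piece φ₀ f v p‖ₑ ^ 2 := fun v =>
    (nice_piece hφ hf hc v).cont.measurable.enorm.pow_const 2
  unfold energy
  simp_rw [← lintegral_const_mul _ (hm _)]
  rw [← lintegral_tsum fun v => ((hm v).const_mul _).aemeasurable,
    ← lintegral_const_mul' _ _ (by finiteness)]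
  refine lintegral_mono fun p => ?_
  have h1 := lp_sum_le hφ hB p.1
  have h2 := lp_sum_le hφ hB p.2
  have e : ∑' v : ℤ × ℤ, (2 : ℝ≥0∞) ^ (((v.1 : ℝ) + v.2) / 2) * ‖piece φ₀ f v p‖ₑ ^ 2 =
      (∑' k : ℤ, (2 : ℝ≥0∞) ^ ((k : ℝ) / 2) * ‖psi φ₀ (((2 : ℝ) ^ k)⁻¹ * p.1)‖ₑ ^ 2) *
      (∑' k : ℤ, (2 : ℝ≥0∞) ^ ((k : ℝ) / 2) * ‖psi φ₀ (((2 : ℝ) ^ k)⁻¹ * p.2)‖ₑ ^ 2) *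
      ‖ft f p‖ₑ ^ 2 := by
    rw [ENNReal.tsum_prod (f := fun a b : ℤ => (2 : ℝ≥0∞) ^ (((a : ℝ) + b) / 2) *
      ‖piece φ₀ f (a, b) p‖ₑ ^ 2), ← ENNReal.tsum_mul_right, ← ENNReal.tsum_mul_right]
    refine tsum_congr fun k => ?_
    rw [← ENNReal.tsum_mul_left, ← ENNReal.tsum_mul_right]
    refine tsum_congr fun l => ?_
    rw [add_div, ENNReal.rpow_add _ _ (by norm_num) (by norm_num), piece, enorm_mul,
      ← ofReal_norm ((_ : ℝ) : ℂ), Complex.norm_real, ofReal_norm, enorm_mul]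
    ring
  rw [e]
  refine (mul_le_mul' (mul_le_mul' h1 h2) le_rfl).trans (le_of_eq ?_)
  have hs : ∀ t : ℝ, ENNReal.ofReal (|t| ^ (1 / 2 : ℝ)) = ‖|t| ^ ((1 / 2 : ℝ) / 2)‖ₑ ^ 2 := by
    intro t
    rw [← ofReal_norm, Real.norm_of_nonneg (by positivity), ← ENNReal.ofReal_pow (by positivity),
      ← Real.rpow_natCast, ← Real.rpow_mul (by positivity)]
    norm_num
  rw [hs, hs, sob, enorm_mul, ← ofReal_norm ((_ : ℝ) : ℂ), Complex.norm_real, ofReal_norm, enorm_mul]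
  ring

/-! ### Reconstruction of `f` from its pieces -/

/-- The partial sum `∑_{-K ≤ k < K} ψ(2^{-k} t)`. -/
noncomputable def cutoff (φ₀ : ℝ → ℝ) (K : ℕ) (t : ℝ) : ℝ :=
  ∑ n ∈ Finset.range (2 * K), psi φ₀ (((2 : ℝ) ^ ((n : ℤ) - K))⁻¹ * t)

/-- The sum defining `cutoff` telescopes. -/
theorem cutoff_eq (φ₀ : ℝ → ℝ) (K : ℕ) (t : ℝ) : cutoff φ₀ K t =
    φ₀ (((2 : ℝ) ^ ((K : ℤ) - 1))⁻¹ * t) - φ₀ (((2 : ℝ) ^ (-(K : ℤ) - 1))⁻¹ * t) := by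
  have h := Finset.sum_range_sub (fun n : ℕ => φ₀ (((2 : ℝ) ^ ((n : ℤ) - K - 1))⁻¹ * t)) (2 * K)
  rw [show ((2 * K : ℕ) : ℤ) - K - 1 = K - 1 by push_cast; ring,
    show ((0 : ℕ) : ℤ) - K - 1 = -K - 1 by push_cast; ring] at h
  rw [← h, cutoff]
  refine Finset.sum_congr rfl fun n _ => ?_
  rw [psi, show ((n + 1 : ℕ) : ℤ) - K - 1 = n - K by push_cast; ring, zpow_sub_one₀ (by norm_num)]
  congr 2
  rw [mul_inv, inv_inv]
  ring

theorem cutoff_bound {φ₀ : ℝ → ℝ} {B : ℝ} (hB : ∀ t, |φ₀ t| ≤ B) (K : ℕ) (t : ℝ) :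
    |cutoff φ₀ K t| ≤ 2 * B := by
  rw [cutoff_eq]
  have := abs_sub (φ₀ (((2 : ℝ) ^ ((K : ℤ) - 1))⁻¹ * t)) (φ₀ (((2 : ℝ) ^ (-(K : ℤ) - 1))⁻¹ * t))
  have h1 := hB (((2 : ℝ) ^ ((K : ℤ) - 1))⁻¹ * t)
  have h2 := hB (((2 : ℝ) ^ (-(K : ℤ) - 1))⁻¹ * t)
  linarith

theorem tendsto_cutoff {φ₀ : ℝ → ℝ} (hφ : IsBump φ₀) {t : ℝ} (ht : t ≠ 0) :
    Tendsto (fun K => cutoff φ₀ K t) atTop (nhds 1) := by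
  have ht' : 0 < |t| := abs_pos.2 ht
  have hpow := tendsto_pow_atTop_atTop_of_one_lt (by norm_num : (1 : ℝ) < 2)
  refine tendsto_const_nhds.congr' ?_
  filter_upwards [hpow.eventually_ge_atTop (2 * |t|), hpow.eventually_ge_atTop (2 / |t|)]
    with K h1 h2
  rw [cutoff_eq, hφ.2.1, hφ.2.2, sub_zero]
  · rw [abs_scale, zpow_sub_one₀ (by norm_num), zpow_neg, zpow_natCast, le_div_iff₀ (by positivity)]
    rw [div_le_iff₀ ht'] at h2
    have : (0 : ℝ) < 2 ^ K := by positivity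
    rw [← mul_assoc, ← div_eq_mul_inv, ← div_eq_mul_inv, div_le_iff₀ (by norm_num),
      div_le_iff₀ this]
    linarith
  · rw [abs_scale, zpow_sub_one₀ (by norm_num), zpow_natCast, div_le_iff₀ (by positivity)]
    linarith

theorem ae_ne_zero : ∀ᵐ p : ℝ × ℝ, p.1 ≠ 0 ∧ p.2 ≠ 0 := by
  have h : ∀ᵐ t : ℝ, t ≠ 0 := Measure.ae_ne volume 0
  exact (Measure.quasiMeasurePreserving_fst.ae h).and (Measure.quasiMeasurePreserving_snd.ae h)

/-- The triangle inequality in `f = ∑ Q_v f`. The finite partial sums over squares of frequencies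
converge by dominated convergence on the Fourier side, where the multiplier tends to `1` off the
coordinate axes. -/
theorem enorm_le_tsum {φ₀ : ℝ → ℝ} (hφ : IsBump φ₀) {f : ℝ × ℝ → ℂ} (hf : ContDiff ℝ (⊤ : ℕ∞) f)
    (hc : HasCompactSupport f) (x : ℝ × ℝ) :
    ‖f x‖ₑ ≤ ∑' v : ℤ × ℤ, ‖ftInv (piece φ₀ f v) x‖ₑ := by
  obtain ⟨B, hB0, hB⟩ := hφ.bounded
  let e : ℝ × ℝ → ℂ := fun ξ =>
    Complex.exp (2 * Real.pi * (x.1 * ξ.1 + x.2 * ξ.2) * Complex.I)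
  have he : Continuous e := by fun_prop
  have hen : ∀ ξ, ‖e ξ‖ = 1 := fun ξ => Nice.norm_char₂ _ _ _ _
  let ι : ℕ → ℕ × ℕ → ℤ × ℤ := fun K n => ((n.1 : ℤ) - K, (n.2 : ℤ) - K)
  let I : ℕ → Finset (ℕ × ℕ) := fun K => Finset.range (2 * K) ×ˢ Finset.range (2 * K)
  have hft : Nice (ft f) := by
    simpa using nice_mul_ft hf hc (m := fun _ => 1) continuous_const (D := 1) fun p => by
      rw [abs_one, one_mul]
      nlinarith [sq_nonneg p.1, sq_nonneg p.2, mul_nonneg (sq_nonneg p.1) (sq_nonneg p.2)]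
  have hsum : ∀ K ξ, ∑ n ∈ I K, e ξ * piece φ₀ f (ι K n) ξ =
      e ξ * (((cutoff φ₀ K ξ.1 * cutoff φ₀ K ξ.2 : ℝ) : ℂ) * ft f ξ) := by
    intro K ξ
    rw [← Finset.mul_sum, cutoff, cutoff, Finset.sum_mul_sum, ← Finset.sum_product']
    simp only [piece, ι, I]
    rw [← Finset.sum_mul]
    push_cast
    rfl
  have hint : ∀ v, Integrable fun ξ => e ξ * piece φ₀ f v ξ := fun v =>
    ((nice_piece hφ hf hc v).integrable).bdd_mul he.aestronglyMeasurable
      (c := 1) (Eventually.of_forall fun ξ => (hen ξ).le)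
  have hlim : Tendsto (fun K => ∑ n ∈ I K, ftInv (piece φ₀ f (ι K n)) x) atTop (nhds (f x)) := by
    have hfx : f x = ∫ ξ, e ξ * ft f ξ := (congrFun (ft_props f hf hc).2.2 x).symm
    have : ∀ K, ∑ n ∈ I K, ftInv (piece φ₀ f (ι K n)) x =
        ∫ ξ, ∑ n ∈ I K, e ξ * piece φ₀ f (ι K n) ξ := fun K =>
      (integral_finsetSum _ fun n _ => hint _).symm
    simp_rw [this, hfx]
    refine tendsto_integral_of_dominated_convergence (fun ξ => (2 * B) * (2 * B) * ‖ft f ξ‖)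
      (fun K => (integrable_finsetSum _ fun n _ => hint _).aestronglyMeasurable)
      (hft.integrable.norm.const_mul _) (fun K => Eventually.of_forall fun ξ => ?_) ?_
    · rw [hsum, norm_mul, hen, one_mul, norm_mul, Complex.norm_real, norm_mul]
      gcongr
      · exact cutoff_bound hB K _
      · exact cutoff_bound hB K _
    · filter_upwards [ae_ne_zero] with ξ hξ
      simp_rw [hsum]
      have h := ((tendsto_cutoff hφ hξ.1).mul (tendsto_cutoff hφ hξ.2)).ofReal
      simpa using (h.mul_const (ft f ξ)).const_mul (e ξ)
  refine le_of_tendsto hlim.enorm (Eventually.of_forall fun K => ?_)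
  refine (enorm_sum_le _ _).trans ?_
  have hinj : Set.InjOn (ι K) (I K) := fun a _ b _ h => by
    simp only [ι, Prod.mk.injEq] at h
    ext <;> omega
  rw [← Finset.sum_image (f := fun v => ‖ftInv (piece φ₀ f v) x‖ₑ) hinj]
  exact ENNReal.sum_le_tsum _

/-! ### Bilinear estimates for the pieces -/

/-- The weight `2^{(k+l)/2} ‖Q_{2^k,2^l} f‖₂²` of the piece `v = (k,l)` in `‖f‖²_{Ḣ_h^{1/2}}`. -/
noncomputable def weight (φ₀ : ℝ → ℝ) (f : ℝ × ℝ → ℂ) (v : ℤ × ℤ) : ℝ≥0∞ :=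
  (2 : ℝ≥0∞) ^ (((v.1 : ℝ) + v.2) / 2) * energy (piece φ₀ f v)

/-- The Besov-type quantity `sup_{M,N} (MN)^{-1/4} ‖Q_{M,N} f‖_∞`. -/
noncomputable def besov (φ₀ : ℝ → ℝ) (f : ℝ × ℝ → ℂ) : ℝ≥0∞ :=
  ⨆ (k : ℤ) (l : ℤ), ENNReal.ofReal (((2 : ℝ) ^ k * (2 : ℝ) ^ l) ^ (-(1 / 4) : ℝ)) *
    eLpNorm (QMN φ₀ ((2 : ℝ) ^ k) ((2 : ℝ) ^ l) f) ⊤ (volume : Measure (ℝ × ℝ))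

theorem two_rpow_add (a b : ℝ) : (2 : ℝ≥0∞) ^ (a + b) = 2 ^ a * 2 ^ b :=
  ENNReal.rpow_add _ _ (by norm_num) (by norm_num)

theorem besov_weight (k l : ℤ) : ENNReal.ofReal (((2 : ℝ) ^ k * (2 : ℝ) ^ l) ^ (-(1 / 4) : ℝ)) =
    (2 : ℝ≥0∞) ^ (-((k : ℝ) + l) / 4) := by
  rw [← ENNReal.ofReal_rpow_of_pos (by positivity), ENNReal.ofReal_mul (by positivity),
    ofReal_two_zpow, ofReal_two_zpow, ← two_rpow_add, ← ENNReal.rpow_mul]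
  congr 1
  ring

/-- The Bernstein constant `2R` for the frequency support radius `R = 2 · 2^k` of a piece. -/
theorem two_mul_radius (k : ℤ) :
    ENNReal.ofReal (2 * (2 * (2 : ℝ) ^ k)) = 4 * (2 : ℝ≥0∞) ^ (k : ℝ) := by
  rw [← mul_assoc, ENNReal.ofReal_mul (by norm_num), ofReal_two_zpow]
  norm_num

/-- Bernstein's inequality in mixed norm: `Q_v f` is bounded in `x`, with values in `L²(dy)`. -/
theorem lintegral_partialInv_piece_le {φ₀ : ℝ → ℝ} (hφ : IsBump φ₀) {f : ℝ × ℝ → ℂ}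
    (hf : ContDiff ℝ (⊤ : ℕ∞) f) (hc : HasCompactSupport f) (v : ℤ × ℤ) (x : ℝ) :
    ∫⁻ η, ‖partialInv (piece φ₀ f v) x η‖ₑ ^ 2 ≤
      4 * (2 : ℝ≥0∞) ^ (v.1 : ℝ) * energy (piece φ₀ f v) := by
  rw [← two_mul_radius]
  exact (nice_piece hφ hf hc v).lintegral_partialInv_le (piece_eq_zero_fst hφ f v) x

/-- Bernstein's inequality in `y` alone. -/
theorem ftInv_piece_sq_le {φ₀ : ℝ → ℝ} (hφ : IsBump φ₀) {f : ℝ × ℝ → ℂ}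
    (hf : ContDiff ℝ (⊤ : ℕ∞) f) (hc : HasCompactSupport f) (v : ℤ × ℤ) (x y : ℝ) :
    ‖ftInv (piece φ₀ f v) (x, y)‖ₑ ^ 2 ≤
      4 * (2 : ℝ≥0∞) ^ (v.2 : ℝ) * ∫⁻ η, ‖partialInv (piece φ₀ f v) x η‖ₑ ^ 2 := by
  rw [← two_mul_radius]
  exact (nice_piece hφ hf hc v).ftInv_sq_le (piece_eq_zero_snd hφ f v) x y

/-- Bernstein's inequality in both variables. -/
theorem ftInv_piece_sq_le_energy {φ₀ : ℝ → ℝ} (hφ : IsBump φ₀) {f : ℝ × ℝ → ℂ}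
    (hf : ContDiff ℝ (⊤ : ℕ∞) f) (hc : HasCompactSupport f) (v : ℤ × ℤ) (p : ℝ × ℝ) :
    ‖ftInv (piece φ₀ f v) p‖ₑ ^ 2 ≤
      16 * (2 : ℝ≥0∞) ^ ((v.1 : ℝ) + v.2) * energy (piece φ₀ f v) := by
  refine (ftInv_piece_sq_le hφ hf hc v p.1 p.2).trans
    ((mul_le_mul_right (lintegral_partialInv_piece_le hφ hf hc v p.1) _).trans (le_of_eq ?_))
  rw [two_rpow_add]
  ring

/-- Moving the frequency factors of two pieces into their weights. -/
theorem energy_mul_eq (φ₀ : ℝ → ℝ) (f : ℝ × ℝ → ℂ) (v w : ℤ × ℤ) {a b : ℝ}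
    (hab : a = (((v.1 : ℝ) + v.2) / 2 + ((w.1 : ℝ) + w.2) / 2) + b) :
    16 * (2 : ℝ≥0∞) ^ a * (energy (piece φ₀ f v) * energy (piece φ₀ f w)) =
      16 * (weight φ₀ f v * weight φ₀ f w) * 2 ^ b := by
  rw [hab, two_rpow_add, two_rpow_add, weight, weight]
  ring

/-- The definition of `besov` bounds a piece almost everywhere; by continuity the bound holds
everywhere. -/
theorem enorm_le_besov {φ₀ : ℝ → ℝ} (hφ : IsBump φ₀) {f : ℝ × ℝ → ℂ}
    (hf : ContDiff ℝ (⊤ : ℕ∞) f) (hc : HasCompactSupport f) (v : ℤ × ℤ) (p : ℝ × ℝ) :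
    ‖ftInv (piece φ₀ f v) p‖ₑ ≤ besov φ₀ f * 2 ^ (((v.1 : ℝ) + v.2) / 4) := by
  have hae : ∀ᵐ p, ‖ftInv (piece φ₀ f v) p‖ₑ ≤ besov φ₀ f * 2 ^ (((v.1 : ℝ) + v.2) / 4) := by
    filter_upwards [enorm_ae_le_eLpNormEssSup (ftInv (piece φ₀ f v)) volume] with p hp
    have hle := le_iSup₂ (f := fun k l : ℤ =>
      ENNReal.ofReal (((2 : ℝ) ^ k * (2 : ℝ) ^ l) ^ (-(1 / 4) : ℝ)) *
      eLpNorm (QMN φ₀ ((2 : ℝ) ^ k) ((2 : ℝ) ^ l) f) ⊤ (volume : Measure (ℝ × ℝ))) v.1 v.2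
    rw [besov_weight, QMN_eq, eLpNorm_exponent_top] at hle
    calc ‖ftInv (piece φ₀ f v) p‖ₑ
        ≤ eLpNormEssSup (ftInv (piece φ₀ f v)) volume := hp
      _ = ((2 : ℝ≥0∞) ^ (-((v.1 : ℝ) + v.2) / 4) * eLpNormEssSup (ftInv (piece φ₀ f v)) volume) *
          2 ^ (((v.1 : ℝ) + v.2) / 4) := by
          rw [mul_right_comm, ← two_rpow_add, show -((v.1 : ℝ) + v.2) / 4 + ((v.1 : ℝ) + v.2) / 4 = 0
            by ring, ENNReal.rpow_zero, one_mul]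
      _ ≤ _ := mul_le_mul_left hle _
  have hcont : Continuous fun p => ‖ftInv (piece φ₀ f v) p‖ₑ :=
    (nice_piece hφ hf hc v).continuous_ftInv.enorm
  have hd := (Measure.dense_of_ae hae).closure_eq
  rw [(isClosed_le hcont continuous_const).closure_eq] at hd
  exact Set.eq_univ_iff_forall.1 hd p

/-- The Besov-type quantity is controlled by the norm of `Ḣ_h^{1/2}`, via Bernstein. -/
theorem besov_le {φ₀ : ℝ → ℝ} (hφ : IsBump φ₀) {B : ℝ} (hB : ∀ t, |φ₀ t| ≤ B)
    {f : ℝ × ℝ → ℂ} (hf : ContDiff ℝ (⊤ : ℕ∞) f) (hc : HasCompactSupport f) :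
    besov φ₀ f ^ 2 ≤ 16 * (ENNReal.ofReal (24 * B ^ 2) ^ 2 * energy (sob f)) := by
  simp only [besov, ENNReal.iSup_pow]
  refine iSup₂_le fun k l => ?_
  rw [besov_weight, QMN_eq, eLpNorm_exponent_top]
  have hs : eLpNormEssSup (ftInv (piece φ₀ f (k, l))) volume ^ 2 ≤
      16 * (2 : ℝ≥0∞) ^ ((k : ℝ) + l) * energy (piece φ₀ f (k, l)) := by
    rw [← ENNReal.rpow_natCast, ← ENNReal.le_rpow_inv_iff (by norm_num)]
    refine eLpNormEssSup_le_of_ae_enorm_bound (Eventually.of_forall fun p => ?_)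
    rw [ENNReal.le_rpow_inv_iff (by norm_num), ENNReal.rpow_natCast]
    exact ftInv_piece_sq_le_energy hφ hf hc (k, l) p
  calc _ = ((2 : ℝ≥0∞) ^ (-((k : ℝ) + l) / 4)) ^ 2 *
        eLpNormEssSup (ftInv (piece φ₀ f (k, l))) volume ^ 2 := mul_pow _ _ _
    _ ≤ ((2 : ℝ≥0∞) ^ (-((k : ℝ) + l) / 4)) ^ 2 *
        (16 * (2 : ℝ≥0∞) ^ ((k : ℝ) + l) * energy (piece φ₀ f (k, l))) := mul_le_mul_right hs _
    _ = 16 * weight φ₀ f (k, l) := by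
        have e : (2 : ℝ≥0∞) ^ (((k : ℝ) + l) / 2) =
            2 ^ (-((k : ℝ) + l) / 4) * 2 ^ (-((k : ℝ) + l) / 4) * 2 ^ ((k : ℝ) + l) := by
          rw [← two_rpow_add, ← two_rpow_add]
          congr 1
          ring
        rw [weight, e]
        ring
    _ ≤ _ := by
        gcongr
        exact (ENNReal.le_tsum (k, l)).trans (tsum_energy_le hφ hB hf hc)

theorem measurable_enorm_ftInv_piece {φ₀ : ℝ → ℝ} (hφ : IsBump φ₀) {f : ℝ × ℝ → ℂ}
    (hf : ContDiff ℝ (⊤ : ℕ∞) f) (hc : HasCompactSupport f) (v : ℤ × ℤ) :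
    Measurable fun p => ‖ftInv (piece φ₀ f v) p‖ₑ :=
  (nice_piece hφ hf hc v).continuous_ftInv.measurable.enorm

/-- `Q_v f` in `L^∞` through the Besov-type quantity, `Q_w f` in `L²`. -/
theorem bilinear_besov {φ₀ : ℝ → ℝ} (hφ : IsBump φ₀) {f : ℝ × ℝ → ℂ}
    (hf : ContDiff ℝ (⊤ : ℕ∞) f) (hc : HasCompactSupport f) (v w : ℤ × ℤ) :
    ∫⁻ p, (‖ftInv (piece φ₀ f v) p‖ₑ * ‖ftInv (piece φ₀ f w) p‖ₑ) ^ 2 ≤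
      besov φ₀ f ^ 2 * weight φ₀ f w *
        2 ^ ((((v.1 - w.1 : ℤ) : ℝ) + ((v.2 - w.2 : ℤ) : ℝ)) / 2) := by
  calc _ ≤ ∫⁻ p, (besov φ₀ f * 2 ^ (((v.1 : ℝ) + v.2) / 4)) ^ 2 *
        ‖ftInv (piece φ₀ f w) p‖ₑ ^ 2 := by
        refine lintegral_mono fun p => ?_
        rw [mul_pow]
        gcongr
        exact enorm_le_besov hφ hf hc v p
    _ = (besov φ₀ f * 2 ^ (((v.1 : ℝ) + v.2) / 4)) ^ 2 * energy (piece φ₀ f w) := by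
        rw [lintegral_const_mul _ ((measurable_enorm_ftInv_piece hφ hf hc w).pow_const 2),
          (nice_piece hφ hf hc w).lintegral_ftInv]
    _ = _ := by
        have e : ((2 : ℝ≥0∞) ^ (((v.1 : ℝ) + v.2) / 4)) ^ 2 =
            2 ^ (((w.1 : ℝ) + w.2) / 2) *
              2 ^ ((((v.1 - w.1 : ℤ) : ℝ) + ((v.2 - w.2 : ℤ) : ℝ)) / 2) := by
          rw [sq, ← two_rpow_add, ← two_rpow_add]
          congr 1
          push_cast
          ring
        rw [mul_pow, e, weight]
        ring

/-- `Q_v f` in `L^∞` through Bernstein in both variables, `Q_w f` in `L²`; favourable when `v` has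
the lower frequency in both variables. -/
theorem bilinear_parallel {φ₀ : ℝ → ℝ} (hφ : IsBump φ₀) {f : ℝ × ℝ → ℂ}
    (hf : ContDiff ℝ (⊤ : ℕ∞) f) (hc : HasCompactSupport f) (v w : ℤ × ℤ) :
    ∫⁻ p, (‖ftInv (piece φ₀ f v) p‖ₑ * ‖ftInv (piece φ₀ f w) p‖ₑ) ^ 2 ≤
      16 * (weight φ₀ f v * weight φ₀ f w) *
        2 ^ ((((v.1 - w.1 : ℤ) : ℝ) + ((v.2 - w.2 : ℤ) : ℝ)) / 2) := by
  calc _ ≤ ∫⁻ p, (16 * (2 : ℝ≥0∞) ^ ((v.1 : ℝ) + v.2) * energy (piece φ₀ f v)) *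
        ‖ftInv (piece φ₀ f w) p‖ₑ ^ 2 := by
        refine lintegral_mono fun p => ?_
        rw [mul_pow]
        gcongr
        exact ftInv_piece_sq_le_energy hφ hf hc v p
    _ = 16 * (2 : ℝ≥0∞) ^ ((v.1 : ℝ) + v.2) *
          (energy (piece φ₀ f v) * energy (piece φ₀ f w)) := by
        rw [lintegral_const_mul _ ((measurable_enorm_ftInv_piece hφ hf hc w).pow_const 2),
          (nice_piece hφ hf hc w).lintegral_ftInv, mul_assoc]
    _ = _ := energy_mul_eq φ₀ f v w (by push_cast; ring)

/-- `Q_v f` in `L^∞_x L²_y` and `Q_w f` in `L²_x L^∞_y`; favourable when `v` has the lower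
frequency in `x` and `w` the lower frequency in `y`. -/
theorem bilinear_transverse {φ₀ : ℝ → ℝ} (hφ : IsBump φ₀) {f : ℝ × ℝ → ℂ}
    (hf : ContDiff ℝ (⊤ : ℕ∞) f) (hc : HasCompactSupport f) (v w : ℤ × ℤ) :
    ∫⁻ p, (‖ftInv (piece φ₀ f v) p‖ₑ * ‖ftInv (piece φ₀ f w) p‖ₑ) ^ 2 ≤
      16 * (weight φ₀ f v * weight φ₀ f w) *
        2 ^ ((((v.1 - w.1 : ℤ) : ℝ) - ((v.2 - w.2 : ℤ) : ℝ)) / 2) := by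
  have hv := nice_piece hφ hf hc v
  have hw := nice_piece hφ hf hc w
  have hmv := measurable_enorm_ftInv_piece hφ hf hc v
  have hmw := measurable_enorm_ftInv_piece hφ hf hc w
  set P : ℝ → ℝ≥0∞ := fun x => ∫⁻ η, ‖partialInv (piece φ₀ f w) x η‖ₑ ^ 2 with hP
  have hslice : ∀ x, ∫⁻ y, (‖ftInv (piece φ₀ f v) (x, y)‖ₑ * ‖ftInv (piece φ₀ f w) (x, y)‖ₑ) ^ 2 ≤
      (4 * (2 : ℝ≥0∞) ^ (v.1 : ℝ) * energy (piece φ₀ f v) * (4 * 2 ^ (w.2 : ℝ))) * P x := by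
    intro x
    calc _ ≤ ∫⁻ y, ‖ftInv (piece φ₀ f v) (x, y)‖ₑ ^ 2 * (4 * (2 : ℝ≥0∞) ^ (w.2 : ℝ) * P x) := by
          refine lintegral_mono fun y => ?_
          rw [mul_pow]
          gcongr
          exact ftInv_piece_sq_le hφ hf hc w x y
      _ = (∫⁻ η, ‖partialInv (piece φ₀ f v) x η‖ₑ ^ 2) * (4 * (2 : ℝ≥0∞) ^ (w.2 : ℝ) * P x) := by
          have hm : Measurable fun y => ‖ftInv (piece φ₀ f v) (x, y)‖ₑ :=
            hmv.comp measurable_prodMk_left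
          rw [lintegral_mul_const _ (hm.pow_const 2), hv.lintegral_ftInv_y]
      _ ≤ _ := by
          rw [mul_assoc (4 * (2 : ℝ≥0∞) ^ (v.1 : ℝ) * energy (piece φ₀ f v)) _ (P x)]
          gcongr
          exact lintegral_partialInv_piece_le hφ hf hc v x
  calc _ = ∫⁻ x, ∫⁻ y,
        (‖ftInv (piece φ₀ f v) (x, y)‖ₑ * ‖ftInv (piece φ₀ f w) (x, y)‖ₑ) ^ 2 := by
        rw [Measure.volume_eq_prod]
        exact lintegral_prod _ ((hmv.mul hmw).pow_const 2).aemeasurable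
    _ ≤ ∫⁻ x, (4 * (2 : ℝ≥0∞) ^ (v.1 : ℝ) * energy (piece φ₀ f v) * (4 * 2 ^ (w.2 : ℝ))) * P x :=
        lintegral_mono hslice
    _ = (4 * (2 : ℝ≥0∞) ^ (v.1 : ℝ) * energy (piece φ₀ f v) * (4 * 2 ^ (w.2 : ℝ))) *
          energy (piece φ₀ f w) := by
        rw [lintegral_const_mul, hw.lintegral_partialInv]
        exact (hw.continuous_partialInv.measurable.enorm.pow_const 2).lintegral_prod_right'
    _ = 16 * (2 : ℝ≥0∞) ^ ((v.1 : ℝ) + w.2) *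
          (energy (piece φ₀ f v) * energy (piece φ₀ f w)) := by
        rw [two_rpow_add]
        ring
    _ = _ := energy_mul_eq φ₀ f v w (by push_cast; ring)

/-! ### The refined inequality -/

theorem fourth_root {N K S H : ℝ≥0∞}
    (h : N ^ 4 ≤ K * S ^ (2 / 3 : ℝ) * (H ^ 2) ^ (5 / 3 : ℝ)) :
    N ≤ K ^ (1 / 4 : ℝ) * (S ^ ((1 : ℝ) / 6) * H ^ ((5 : ℝ) / 6)) := by
  have e : N = (N ^ 4) ^ (1 / 4 : ℝ) := by
    rw [← ENNReal.rpow_natCast, ← ENNReal.rpow_mul]; norm_num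
  rw [e]
  refine (ENNReal.rpow_le_rpow h (by norm_num)).trans (le_of_eq ?_)
  rw [ENNReal.mul_rpow_of_nonneg _ _ (by norm_num), ENNReal.mul_rpow_of_nonneg _ _ (by norm_num),
    ← ENNReal.rpow_natCast, ← ENNReal.rpow_mul, ← ENNReal.rpow_mul, ← ENNReal.rpow_mul, mul_assoc]
  norm_num

/-- **Refined `L⁴` inequality in the anisotropic Sobolev space `Ḣ_h^{1/2}`.** -/
theorem refined_L4_inequality (φ₀ : ℝ → ℝ) (hφ₀ : IsBump φ₀) :
    ∃ C : ℝ, 0 < C ∧ ∀ f : ℝ × ℝ → ℂ, ContDiff ℝ (⊤ : ℕ∞) f → HasCompactSupport f →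
      (eLpNorm f 4 (volume : Measure (ℝ × ℝ)) ≤
        ENNReal.ofReal C *
          ((⨆ (k : ℤ) (l : ℤ),
              ENNReal.ofReal (((2:ℝ)^k * (2:ℝ)^l) ^ (-(1/4) : ℝ)) *
                eLpNorm (QMN φ₀ ((2:ℝ)^k) ((2:ℝ)^l) f) ⊤ (volume : Measure (ℝ × ℝ))) ^
            ((1 : ℝ)/6)) *
          (eLpNorm (anisoDeriv (1/2) f) 2 (volume : Measure (ℝ × ℝ))) ^ ((5 : ℝ)/6)) ∧
      eLpNorm f 4 (volume : Measure (ℝ × ℝ)) ≤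
        ENNReal.ofReal C * eLpNorm (anisoDeriv (1/2) f) 2 (volume : Measure (ℝ × ℝ)) := by
  obtain ⟨B, -, hB⟩ := hφ₀.bounded
  set D : ℝ≥0∞ := ENNReal.ofReal (24 * B ^ 2) with hD
  have hDt : D ≠ ⊤ := ENNReal.ofReal_ne_top
  -- `K` is the constant of the first inequality; `K * L` that of the second, where `L` is the cost
  -- of replacing `S ^ (1/6)` by `H ^ (1/6)`.
  set K : ℝ≥0∞ := (4 * kernMass ^ 3 * 16 ^ (2 / 3 : ℝ) * (D ^ 2) ^ (5 / 3 : ℝ)) ^ (1 / 4 : ℝ) with hK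
  have hKt : K ≠ ⊤ := by
    have := kernMass_ne_top
    have h1 : (16 : ℝ≥0∞) ^ (2 / 3 : ℝ) ≠ ⊤ := ENNReal.rpow_ne_top_of_nonneg (by norm_num) (by norm_num)
    have h2 : (D ^ 2) ^ (5 / 3 : ℝ) ≠ ⊤ :=
      ENNReal.rpow_ne_top_of_nonneg (by norm_num) (by finiteness)
    exact ENNReal.rpow_ne_top_of_nonneg (by norm_num) (by finiteness)
  set L : ℝ≥0∞ := (4 * D) ^ ((1 : ℝ) / 6) with hL
  have hLt : L ≠ ⊤ := ENNReal.rpow_ne_top_of_nonneg (by norm_num) (by finiteness)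
  have hC1 : K ≤ ENNReal.ofReal ((K + K * L).toReal + 1) := by
    refine le_trans ?_ (ENNReal.ofReal_le_ofReal (le_add_of_nonneg_right zero_le_one))
    rw [ENNReal.ofReal_toReal (by finiteness)]
    exact le_self_add
  have hC2 : K * L ≤ ENNReal.ofReal ((K + K * L).toReal + 1) := by
    refine le_trans ?_ (ENNReal.ofReal_le_ofReal (le_add_of_nonneg_right zero_le_one))
    rw [ENNReal.ofReal_toReal (by finiteness)]
    exact le_add_self
  refine ⟨(K + K * L).toReal + 1, by positivity, fun f hf hc => ?_⟩
  change _ ≤ _ * besov φ₀ f ^ ((1 : ℝ) / 6) * _ ∧ _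
  set S := besov φ₀ f
  rw [anisoDeriv_eq]
  set H := eLpNorm (ftInv (sob f)) 2 (volume : Measure (ℝ × ℝ)) with hH
  have hHE : H ^ 2 = energy (sob f) := by
    have e := eLpNorm_nnreal_pow_eq_lintegral (μ := volume) (f := ftInv (sob f)) (p := 2)
      (by norm_num)
    simp only [NNReal.coe_ofNat, ENNReal.coe_ofNat, ENNReal.rpow_ofNat] at e
    rw [hH, e, (nice_sob hf hc).lintegral_ftInv]
  have hN : eLpNorm f 4 (volume : Measure (ℝ × ℝ)) ^ 4 = ∫⁻ p, ‖f p‖ₑ ^ 4 := by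
    have e := eLpNorm_nnreal_pow_eq_lintegral (μ := volume) (f := f) (p := 4) (by norm_num)
    simpa only [NNReal.coe_ofNat, ENNReal.coe_ofNat, ENNReal.rpow_ofNat] using e
  have hquart := quartic_sum_le (μ := volume) (measurable_enorm_ftInv_piece hφ₀ hf hc)
    (bilinear_besov hφ₀ hf hc) (bilinear_parallel hφ₀ hf hc) (bilinear_transverse hφ₀ hf hc)
  have hmain : eLpNorm f 4 (volume : Measure (ℝ × ℝ)) ≤
      K * (S ^ ((1 : ℝ) / 6) * H ^ ((5 : ℝ) / 6)) := by
    refine fourth_root ?_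
    rw [hN]
    calc ∫⁻ p, ‖f p‖ₑ ^ 4
        ≤ ∫⁻ p, (∑' v : ℤ × ℤ, ‖ftInv (piece φ₀ f v) p‖ₑ) ^ 4 :=
          lintegral_mono fun p => by
            gcongr
            exact enorm_le_tsum hφ₀ hf hc p
      _ ≤ _ := hquart
      _ ≤ 4 * kernMass ^ 3 * (16 ^ (2 / 3 : ℝ) * S ^ (2 / 3 : ℝ)) * (D ^ 2 * H ^ 2) ^ (5 / 3 : ℝ) := by
          gcongr
          rw [hHE]
          exact tsum_energy_le hφ₀ hB hf hc
      _ = _ := by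
          rw [ENNReal.mul_rpow_of_nonneg _ _ (by norm_num)]
          ring
  have hS : S ≤ 4 * D * H := by
    refine (ENNReal.pow_le_pow_left_iff two_ne_zero).1 ((besov_le hφ₀ hB hf hc).trans (le_of_eq ?_))
    rw [← hHE]
    ring
  refine ⟨hmain.trans ?_, hmain.trans ?_⟩
  · rw [← mul_assoc]
    gcongr
  · calc K * (S ^ ((1 : ℝ) / 6) * H ^ ((5 : ℝ) / 6))
        ≤ K * ((4 * D * H) ^ ((1 : ℝ) / 6) * H ^ ((5 : ℝ) / 6)) := by gcongr
      _ = K * L * H := by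
          rw [ENNReal.mul_rpow_of_nonneg _ _ (by norm_num), mul_assoc _ (H ^ _),
            ← ENNReal.rpow_add_of_nonneg _ _ (by norm_num) (by norm_num)]
          norm_num [mul_assoc, hL]
      _ ≤ _ := by gcongr
end

section
/- Whitney decomposition: there exists a countable family of products I × J of dyadic intervals of ℝ with |I| = |J| which tile the complement ℝ² ∖ D of the diagonal D = {(x,x) : x ∈ ℝ} (i.e. the squares I × J are pairwise disjoint up to measure zero and their union is ℝ² ∖ D), and such that every square I × J in the family satisfies 6|I| ≤ dist(I × J, D) ≤ 24|I|. -/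
/-!
For scale `2 ^ k`, call a square with indices `n`, `m` *far* if `10 ≤ |n - m|`. The dyadic parent
has indices `n / 2`, `m / 2` (floor division), so a far parent has only far children. The family
consists of the maximal far squares, i.e. the far squares whose parent is not far (`whitneyFamily`).

* Covering: off the diagonal, the dyadic square of scale `2 ^ k` containing a point is far for `k`
  very negative and not far for `k` large, so there is a greatest `k` at which it is far
  (`exists_maximal_far`).
* Disjointness: outside the null set of points with a dyadic rational coordinate, a point of a
  dyadic square determines the indices of the square through its scale as floors (`dyadIndex`), and
  maximality together with monotonicity of farness determines the scale.
* Distance: maximality forces `10 ≤ |n - m| ≤ 19`. As the distance of `(x, y)` to the diagonal is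
  `|x - y| / √2`, the distance of the square to the diagonal is at least `(9 / √2) * 2 ^ k` and at
  most `(19 / √2) * 2 ^ k`; and `6 ≤ 9 / √2`, `19 / √2 ≤ 24`.
-/

open MeasureTheory Real Filter
open scoped ENNReal

/-- The dyadic interval `[2^k n, 2^k (n+1)]`. -/
def dyadInt (k n : ℤ) : Set ℝ := Set.Icc ((2:ℝ)^k * n) ((2:ℝ)^k * (n + 1))

/-- The product `I × J ⊂ ℝ²` of the dyadic intervals indexed by `q = ((k,n),(k',m))`. -/
def dyadSq (q : (ℤ × ℤ) × (ℤ × ℤ)) : Set (ℝ × ℝ) :=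
  (dyadInt q.1.1 q.1.2) ×ˢ (dyadInt q.2.1 q.2.2)

/-- The Euclidean distance of a set `S ⊂ ℝ²` to the diagonal `D = {(x,x) : x ∈ ℝ}`. -/
noncomputable def distToDiag (S : Set (ℝ × ℝ)) : ℝ :=
  sInf {d : ℝ | ∃ a ∈ S, ∃ c : ℝ, d = Real.sqrt ((a.1 - c)^2 + (a.2 - c)^2)}

/-- The index `n` of the half-open dyadic interval `[2^k n, 2^k (n+1))` containing `x`. -/
noncomputable def dyadIndex (k : ℤ) (x : ℝ) : ℤ := ⌊x / (2:ℝ)^k⌋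

/-- The maximal dyadic squares among those whose indices differ by at least `10`. Integer division
rounds down, so `n / 2` is the index of the dyadic parent of the interval with index `n`. -/
def whitneyFamily : Set ((ℤ × ℤ) × (ℤ × ℤ)) :=
  {q | q.1.1 = q.2.1 ∧ 10 ≤ |q.1.2 - q.2.2| ∧ |q.1.2 / 2 - q.2.2 / 2| ≤ 9}

/-- The endpoints of all dyadic intervals. -/
def dyadicPoints : Set ℝ := Set.range fun p : ℤ × ℤ => (2:ℝ)^p.1 * p.2

lemma dyadIndex_succ (k : ℤ) (x : ℝ) : dyadIndex (k + 1) x = dyadIndex k x / 2 := by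
  have h := Int.floor_div_natCast (x / (2:ℝ)^k) 2
  unfold dyadIndex
  rw [zpow_add_one₀ (by norm_num), ← div_div]
  exact_mod_cast h

lemma mem_dyadInt_dyadIndex (k : ℤ) (x : ℝ) : x ∈ dyadInt k (dyadIndex k x) := by
  have hk : (0:ℝ) < 2^k := by positivity
  constructor
  · rw [mul_comm, ← le_div_iff₀ hk]
    exact Int.floor_le _
  · rw [mul_comm, ← div_le_iff₀ hk]
    exact (Int.lt_floor_add_one _).le

lemma eq_dyadIndex {k n : ℤ} {x : ℝ} (hx : x ∈ dyadInt k n) (hd : x ∉ dyadicPoints) :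
    n = dyadIndex k x := by
  have hk : (0:ℝ) < 2^k := by positivity
  symm
  rw [dyadIndex, Int.floor_eq_iff, le_div_iff₀ hk, div_lt_iff₀ hk, mul_comm (n:ℝ),
    mul_comm _ ((2:ℝ)^k)]
  refine ⟨hx.1, lt_of_le_of_ne hx.2 ?_⟩
  rintro rfl
  exact hd ⟨(k, n + 1), by push_cast; rfl⟩

/-- Once a point's dyadic square is not far, neither are its ancestors. -/
lemma dyadIndex_near_mono {k l : ℤ} (hkl : k ≤ l) {x y : ℝ}
    (h : |dyadIndex k x - dyadIndex k y| ≤ 9) : |dyadIndex l x - dyadIndex l y| ≤ 9 := by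
  induction l, hkl using Int.leInduction with
  | base => exact h
  | succ l _ ih =>
    rw [dyadIndex_succ, dyadIndex_succ]
    rw [abs_le] at ih ⊢
    omega

lemma exists_far {x y : ℝ} (h : x ≠ y) : ∃ k : ℤ, 10 ≤ |dyadIndex k x - dyadIndex k y| := by
  obtain ⟨N, hN⟩ := exists_pow_lt_of_lt_one (y := (1/2 : ℝ))
    (show (0:ℝ) < |x - y| / 11 by have := abs_pos.2 (sub_ne_zero.2 h); positivity) (by norm_num)
  refine ⟨-N, ?_⟩
  have hp : (2:ℝ)^(-(N:ℤ)) = (1/2)^N := by simp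
  have hk : (0:ℝ) < 2^(-(N:ℤ)) := by positivity
  rw [← hp] at hN
  have h1 : (11:ℝ) < |x / 2^(-(N:ℤ)) - y / 2^(-(N:ℤ))| := by
    rw [← sub_div, abs_div, abs_of_pos hk, lt_div_iff₀ hk]
    linarith
  unfold dyadIndex
  generalize x / (2:ℝ)^(-(N:ℤ)) = u at *
  generalize y / (2:ℝ)^(-(N:ℤ)) = v at *
  have hu := Int.floor_le u
  have hu' := Int.lt_floor_add_one u
  have hv := Int.floor_le v
  have hv' := Int.lt_floor_add_one v
  rcases lt_abs.1 h1 with h1 | h1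
  · have : (10:ℝ) < ((⌊u⌋ - ⌊v⌋ : ℤ) : ℝ) := by push_cast; linarith
    have : (10:ℤ) < ⌊u⌋ - ⌊v⌋ := by exact_mod_cast this
    exact le_abs.2 (Or.inl this.le)
  · have : (10:ℝ) < ((-(⌊u⌋ - ⌊v⌋) : ℤ) : ℝ) := by push_cast; linarith
    have : (10:ℤ) < -(⌊u⌋ - ⌊v⌋) := by exact_mod_cast this
    exact le_abs.2 (Or.inr this.le)

lemma exists_near (x y : ℝ) : ∃ k : ℤ, |dyadIndex k x - dyadIndex k y| ≤ 9 := by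
  obtain ⟨N, hN⟩ := pow_unbounded_of_one_lt |x - y| (one_lt_two (α := ℝ))
  refine ⟨N, ?_⟩
  have hk : (0:ℝ) < 2^(N:ℤ) := by positivity
  have h1 : |x / 2^(N:ℤ) - y / 2^(N:ℤ)| < (1:ℝ) := by
    rw [← sub_div, abs_div, abs_of_pos hk, div_lt_iff₀ hk]
    simpa using hN
  unfold dyadIndex
  generalize x / (2:ℝ)^(N:ℤ) = u at *
  generalize y / (2:ℝ)^(N:ℤ) = v at *
  have hu := Int.floor_le u
  have hu' := Int.lt_floor_add_one u
  have hv := Int.floor_le v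
  have hv' := Int.lt_floor_add_one v
  rw [abs_lt] at h1
  rw [abs_le]
  constructor
  · have : (-9:ℝ) ≤ ((⌊u⌋ - ⌊v⌋ : ℤ) : ℝ) := by push_cast; linarith
    exact_mod_cast this
  · have : ((⌊u⌋ - ⌊v⌋ : ℤ) : ℝ) ≤ 9 := by push_cast; linarith
    exact_mod_cast this

lemma exists_maximal_far {x y : ℝ} (h : x ≠ y) :
    ∃ k : ℤ, 10 ≤ |dyadIndex k x - dyadIndex k y| ∧
      |dyadIndex (k + 1) x - dyadIndex (k + 1) y| ≤ 9 := by
  obtain ⟨K, hK⟩ := exists_near x y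
  obtain ⟨k, hk, hmax⟩ := Int.exists_greatest_of_bdd
    (P := fun k => 10 ≤ |dyadIndex k x - dyadIndex k y|)
    ⟨K, fun z hz => by
      by_contra! hlt
      have := dyadIndex_near_mono hlt.le hK
      omega⟩ (exists_far h)
  refine ⟨k, hk, ?_⟩
  by_contra! hlt
  have := hmax (k + 1) (by omega)
  omega

/-- A point with no dyadic coordinate lies in at most one square of the family. -/
lemma whitneyFamily_unique {q q' : (ℤ × ℤ) × (ℤ × ℤ)} (hq : q ∈ whitneyFamily)
    (hq' : q' ∈ whitneyFamily) {p : ℝ × ℝ} (hp : p ∈ dyadSq q) (hp' : p ∈ dyadSq q')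
    (h1 : p.1 ∉ dyadicPoints) (h2 : p.2 ∉ dyadicPoints) : q = q' := by
  obtain ⟨⟨k, n⟩, ⟨k₂, m⟩⟩ := q
  obtain ⟨⟨k', n'⟩, ⟨k₂', m'⟩⟩ := q'
  obtain ⟨rfl : k = k₂, hf, hn⟩ := hq
  obtain ⟨rfl : k' = k₂', hf', hn'⟩ := hq'
  obtain rfl : n = dyadIndex k p.1 := eq_dyadIndex hp.1 h1
  obtain rfl : m = dyadIndex k p.2 := eq_dyadIndex hp.2 h2
  obtain rfl : n' = dyadIndex k' p.1 := eq_dyadIndex hp'.1 h1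
  obtain rfl : m' = dyadIndex k' p.2 := eq_dyadIndex hp'.2 h2
  simp only [← dyadIndex_succ] at hf hn hf' hn'
  obtain rfl : k = k' := by
    rcases lt_trichotomy k k' with h | h | h
    · have := dyadIndex_near_mono (show k + 1 ≤ k' by omega) hn
      omega
    · exact h
    · have := dyadIndex_near_mono (show k' + 1 ≤ k by omega) hn'
      omega
  rfl

lemma volume_dyadicPoints_strips :
    volume ((dyadicPoints ×ˢ Set.univ) ∪ (Set.univ ×ˢ dyadicPoints) : Set (ℝ × ℝ)) = 0 := by
  have h : volume dyadicPoints = 0 := (Set.countable_range _).measure_zero _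
  rw [measure_union_null_iff, Measure.volume_eq_prod, Measure.prod_prod, Measure.prod_prod, h]
  simp

/-- The sides of a far square are separated by a gap of at least `9 * 2 ^ k`. -/
lemma gap_of_mem {k n m : ℤ} (h : 10 ≤ |n - m|) {x y : ℝ} (hx : x ∈ dyadInt k n)
    (hy : y ∈ dyadInt k m) : 9 * (2:ℝ)^k ≤ |x - y| := by
  have hk : (0:ℝ) < 2^k := by positivity
  obtain ⟨hx1, hx2⟩ := hx
  obtain ⟨hy1, hy2⟩ := hy
  rcases le_abs.1 h with h | h
  · have h' : (10:ℝ) ≤ n - m := by exact_mod_cast h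
    refine le_abs.2 (Or.inl ?_)
    nlinarith
  · have h' : (10:ℝ) ≤ -(n - m) := by exact_mod_cast h
    refine le_abs.2 (Or.inr ?_)
    nlinarith

lemma le_distToDiag {k n m : ℤ} (h : 10 ≤ |n - m|) :
    6 * (2:ℝ)^k ≤ distToDiag (dyadSq ((k, n), (k, m))) := by
  have hk : (0:ℝ) < 2^k := by positivity
  apply le_csInf
  · exact ⟨_, ((2:ℝ)^k * n, (2:ℝ)^k * m),
      ⟨⟨le_rfl, by dsimp only; linarith⟩, ⟨le_rfl, by dsimp only; linarith⟩⟩, 0, rfl⟩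
  · rintro d ⟨a, ha, c, rfl⟩
    have hg := gap_of_mem h ha.1 ha.2
    have hsq : (9 * (2:ℝ)^k)^2 ≤ (a.1 - a.2)^2 := by
      rw [← sq_abs (a.1 - a.2)]
      gcongr
    apply Real.le_sqrt_of_sq_le
    -- `(x - c)² + (y - c)² = ((x - y)² + (x + y - 2c)²) / 2`
    nlinarith [sq_nonneg (a.1 + a.2 - 2 * c)]

lemma distToDiag_le {k n m : ℤ} (h : |n / 2 - m / 2| ≤ 9) :
    distToDiag (dyadSq ((k, n), (k, m))) ≤ 24 * (2:ℝ)^k := by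
  have hk : (0:ℝ) < 2^k := by positivity
  have h19 : |n - m| ≤ 19 := by
    rw [abs_le] at h ⊢
    omega
  have h19' : |(n:ℝ) - m| ≤ 19 := by exact_mod_cast h19
  -- The lower left corner and its orthogonal projection to the diagonal.
  have hle : distToDiag (dyadSq ((k, n), (k, m))) ≤
      Real.sqrt (((2:ℝ)^k * n - (2:ℝ)^k * (n + m) / 2)^2
        + ((2:ℝ)^k * m - (2:ℝ)^k * (n + m) / 2)^2) := by
    apply csInf_le
    · refine ⟨0, ?_⟩
      rintro d ⟨a, -, c, rfl⟩
      exact Real.sqrt_nonneg _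
    · exact ⟨((2:ℝ)^k * n, (2:ℝ)^k * m),
        ⟨⟨le_rfl, by dsimp only; linarith⟩, ⟨le_rfl, by dsimp only; linarith⟩⟩, _, rfl⟩
  refine hle.trans (Real.sqrt_le_iff.2 ⟨by positivity, ?_⟩)
  have hsq : ((n:ℝ) - m)^2 ≤ 19^2 := by
    rw [← sq_abs]
    gcongr
  have : ((2:ℝ)^k)^2 * ((n:ℝ) - m)^2 ≤ ((2:ℝ)^k)^2 * 19^2 := by gcongr
  nlinarith [sq_nonneg ((2:ℝ)^k)]

/-- **Whitney decomposition**: there is a countable family of products `I × J` of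
dyadic intervals with `|I| = |J|` which tile `ℝ² ∖ D` (pairwise disjoint up to
measure zero, union equal to `ℝ² ∖ D`), each square satisfying
`6|I| ≤ dist(I × J, D) ≤ 24|I|`. -/
theorem whitney_decomposition :
    ∃ S : Set ((ℤ × ℤ) × (ℤ × ℤ)), S.Countable ∧
      (∀ q ∈ S, q.1.1 = q.2.1) ∧
      (∀ q ∈ S, ∀ q' ∈ S, q ≠ q' →
        volume (dyadSq q ∩ dyadSq q') = 0) ∧
      (⋃ q ∈ S, dyadSq q) = {p : ℝ × ℝ | p.1 ≠ p.2} ∧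
      (∀ q ∈ S, 6 * (2:ℝ)^q.1.1 ≤ distToDiag (dyadSq q) ∧
        distToDiag (dyadSq q) ≤ 24 * (2:ℝ)^q.1.1) := by
  refine ⟨whitneyFamily, Set.to_countable _, fun q hq => hq.1, ?_, ?_, ?_⟩
  · intro q hq q' hq' hne
    refine measure_mono_null ?_ volume_dyadicPoints_strips
    rintro p ⟨hp, hp'⟩
    by_contra hnot
    have h1 : p.1 ∉ dyadicPoints := fun h => hnot (Or.inl ⟨h, trivial⟩)
    have h2 : p.2 ∉ dyadicPoints := fun h => hnot (Or.inr ⟨trivial, h⟩)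
    exact hne (whitneyFamily_unique hq hq' hp hp' h1 h2)
  · ext ⟨x, y⟩
    simp only [Set.mem_iUnion, exists_prop, Set.mem_ofPred_eq]
    constructor
    · rintro ⟨⟨⟨k, n⟩, ⟨k₂, m⟩⟩, ⟨rfl : k = k₂, hf, -⟩, hx, hy⟩ rfl
      have hk : (0:ℝ) < 2^k := by positivity
      have := gap_of_mem hf hx hy
      rw [sub_self, abs_zero] at this
      linarith
    · intro hxy
      obtain ⟨k, hf, hn⟩ := exists_maximal_far hxy
      rw [dyadIndex_succ, dyadIndex_succ] at hn
      exact ⟨((k, dyadIndex k x), (k, dyadIndex k y)), ⟨rfl, hf, hn⟩,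
        mem_dyadInt_dyadIndex k x, mem_dyadInt_dyadIndex k y⟩
  · rintro ⟨⟨k, n⟩, ⟨k₂, m⟩⟩ ⟨rfl : k = k₂, hf, hn⟩
    exact ⟨le_distToDiag hf, distToDiag_le hn⟩
end

section
/- Two-dimensional conditional X_p-type estimate: for every p > 2 there is a constant C(p) such that the following holds. For any interval I ⊂ ℝ and any f ∈ C_c^∞(ℝ²) supported in I × ℝ (i.e. f = f·1_{I×ℝ}), Σ_{J ∈ 𝓓} |J|^{−p/20} ‖f·1_{I×J}‖_{L^{20/11}(ℝ²)}^p ≤ C(p) ‖f‖_{L^{20/11}_x L²_y}^p, where ‖f‖_{L^{20/11}_x L²_y} = ( ∫_I ( ∫_ℝ |f(x,y)|² dy )^{(20/11)·(1/2)} dx )^{11/20}. -/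
/-!
The proof is a real interpolation argument carried out at every `x` with its own threshold. Put
`q = 20 / 11`, so that `1 / q - 1 / 2 = 1 / 20`, and let `u = |f|`, `A x = ‖f (x, ·)‖_{L²}`. At
scale `|J| = 2 ^ k` the function is cut at the height `2 ^ (-k / 2) * A x`.

* The part above the threshold is treated by `ℓ¹ ⊂ ℓ^(p / q)` (`tsum_rpow_le_rpow_tsum`), which
  reduces it to the sum over all `J` of `|J| ^ (-q / 20) * ∫ u ^ q`.
* The part below the threshold is treated by Hölder's inequality on `ℝ × J` with exponent `p / q`
  against the weight `A ^ q`, which reduces it to the sum of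
  `|J| ^ (p / 2 - 1) * ∫ u ^ p * A ^ (q - p)`. The hypothesis `p > 2` makes the exponent positive.

In both cases the sum over the admissible scales is, at each point, a geometric series
(`tsum_two_rpow_le`, `tsum_two_rpow_neg_le`) bounded by a multiple of `A ^ (q - 2) * u ^ 2`.
Integrating this in `y` gives `A ^ q`, and the integral of `A ^ q` in `x` is the `q`-th power of
the mixed norm. Everything is done with `ℝ≥0∞`-valued integrals in `mixed_norm_estimate`;
the smoothness and compact support of `f` only serve to identify the real-valued integrals of the
statement with these.
-/

open MeasureTheory Real Filter
open scoped ENNReal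

/-! ### Sums of powers -/

/-- The embedding `ℓ¹ ⊂ ℓ^r` for `r ≥ 1`. -/
lemma tsum_rpow_le_rpow_tsum {ι : Type*} (f : ι → ℝ≥0∞) {r : ℝ} (hr : 1 ≤ r) :
    ∑' i, f i ^ r ≤ (∑' i, f i) ^ r := by
  have key : ∀ x : ℝ≥0∞, x ^ r = x * x ^ (r - 1) := fun x => by
    conv_rhs => rw [← ENNReal.rpow_one x, ← ENNReal.rpow_mul, one_mul]
    rw [← ENNReal.rpow_add_of_nonneg _ _ zero_le_one (by linarith)]
    congr 1; ring
  calc ∑' i, f i ^ r ≤ ∑' i, f i * (∑' i, f i) ^ (r - 1) := by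
        refine ENNReal.tsum_le_tsum fun i => ?_
        rw [key]
        exact mul_le_mul_right (ENNReal.rpow_le_rpow (ENNReal.le_tsum i) (by linarith)) _
    _ = (∑' i, f i) ^ r := by rw [ENNReal.tsum_mul_right, ← key]

/-- The geometric series over the scales `2 ^ k ≤ t` is dominated by its largest term, which is at
most `t ^ a`. -/
lemma tsum_two_rpow_le {a : ℝ} (ha : 0 < a) : ∃ C : ℝ≥0∞, C ≠ ⊤ ∧ ∀ t : ℝ≥0∞,
    ∑' k : ℤ, (if (2:ℝ≥0∞) ^ (k:ℝ) ≤ t then (2:ℝ≥0∞) ^ ((k:ℝ) * a) else 0) ≤ C * t ^ a := by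
  have hlt : (2:ℝ≥0∞) ^ (-a) < 1 :=
    ENNReal.rpow_lt_one_of_one_lt_of_neg (by norm_num) (by linarith)
  refine ⟨(1 - (2:ℝ≥0∞) ^ (-a))⁻¹, ?_, fun t => ?_⟩
  · simp only [ne_eq, ENNReal.inv_eq_top]
    exact (tsub_pos_of_lt hlt).ne'
  have hC0 : (1 - (2:ℝ≥0∞) ^ (-a))⁻¹ ≠ 0 :=
    ENNReal.inv_ne_zero.2 (ne_top_of_le_ne_top ENNReal.one_ne_top tsub_le_self)
  rcases eq_or_ne t ⊤ with rfl | htop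
  · rw [ENNReal.top_rpow_of_pos ha, ENNReal.mul_top hC0]; exact le_top
  rcases eq_or_ne t 0 with rfl | h0
  · have : ∀ k : ℤ, ¬ ((2:ℝ≥0∞) ^ (k:ℝ) ≤ 0) := fun k => by
      simp only [nonpos_iff_eq_zero, ENNReal.rpow_eq_zero_iff]
      norm_num
    simp only [this, if_false, tsum_zero]
    exact zero_le
  obtain ⟨m, hm1, hm2⟩ := ENNReal.exists_mem_Ico_zpow (y := 2) h0 htop (by norm_num) (by simp)
  simp only [← ENNReal.rpow_intCast] at hm1 hm2
  have h2 : ∀ k : ℤ, (2:ℝ≥0∞) ^ (k:ℝ) ≤ t → k ≤ m := fun k hk => by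
    by_contra! hlt
    have : (2:ℝ≥0∞) ^ ((m + 1 : ℤ):ℝ) ≤ (2:ℝ≥0∞) ^ (k:ℝ) := by
      apply ENNReal.rpow_le_rpow_of_exponent_le (by norm_num)
      exact_mod_cast hlt
    exact absurd (hm2.trans_le (this.trans hk)) (lt_irrefl _)
  set F : ℤ → ℝ≥0∞ := fun k => if k ≤ m then (2:ℝ≥0∞) ^ ((k:ℝ) * a) else 0 with hF
  have hinj : Function.Injective (fun j : ℕ => m - (j:ℤ)) := fun i j h => by
    simp only at h; omega
  have hsupp : Function.support F ⊆ Set.range (fun j : ℕ => m - (j:ℤ)) := fun k hk => by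
    have : k ≤ m := by
      by_contra h
      simp [hF, h] at hk
    exact ⟨(m - k).toNat, by simp only; omega⟩
  calc _ ≤ ∑' k, F k := by
        refine ENNReal.tsum_le_tsum fun k => ?_
        split_ifs with h
        · simp [hF, h2 k h]
        · exact zero_le
    _ = ∑' j : ℕ, F (m - (j:ℤ)) := (hinj.tsum_eq hsupp).symm
    _ = ∑' j : ℕ, (2:ℝ≥0∞) ^ ((m:ℝ) * a) * ((2:ℝ≥0∞) ^ (-a)) ^ j := by
        refine tsum_congr fun j => ?_
        have : m - (j:ℤ) ≤ m := by omega
        simp only [hF, this, if_true]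
        rw [← ENNReal.rpow_natCast, ← ENNReal.rpow_mul,
          ← ENNReal.rpow_add _ _ two_ne_zero ENNReal.ofNat_ne_top]
        congr 1; push_cast; ring
    _ = (1 - (2:ℝ≥0∞) ^ (-a))⁻¹ * (2:ℝ≥0∞) ^ ((m:ℝ) * a) := by
        rw [ENNReal.tsum_mul_left, ENNReal.tsum_geometric, mul_comm]
    _ ≤ _ := by
        gcongr
        rw [ENNReal.rpow_mul]
        gcongr

/-- The counterpart of `tsum_two_rpow_le` for the scales above `t`, obtained from it by the
reflection `k ↦ -k`, `t ↦ t⁻¹`. -/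
lemma tsum_two_rpow_neg_le {a : ℝ} (ha : 0 < a) : ∃ C : ℝ≥0∞, C ≠ ⊤ ∧ ∀ t : ℝ≥0∞,
    ∑' k : ℤ, (if t < (2:ℝ≥0∞) ^ (k:ℝ) then (2:ℝ≥0∞) ^ (-(k:ℝ) * a) else 0) ≤ C * t ^ (-a) := by
  obtain ⟨C, hC, h⟩ := tsum_two_rpow_le ha
  refine ⟨C, hC, fun t => ?_⟩
  rw [ENNReal.rpow_neg, ← ENNReal.inv_rpow]
  refine le_trans (le_of_eq_of_le (b := ∑' k : ℤ,
    if t < (2:ℝ≥0∞) ^ (-(k:ℝ)) then (2:ℝ≥0∞) ^ ((k:ℝ) * a) else 0) ?_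
    (ENNReal.tsum_le_tsum fun k => ?_)) (h t⁻¹)
  · rw [← (Equiv.neg ℤ).tsum_eq]
    refine tsum_congr fun k => ?_
    simp only [Equiv.neg_apply, Int.cast_neg, neg_neg]
  · split_ifs with h1 h2
    · exact le_rfl
    · refine absurd ?_ h2
      rw [ENNReal.rpow_neg] at h1
      exact (ENNReal.lt_inv_iff_lt_inv.1 h1).le
    · exact zero_le
    · exact zero_le

/-! ### Integrals over dyadic strips -/

/-- The dyadic intervals are closed, so a point may belong to two intervals of the same length;
this is the reason for the constant `2`. -/
lemma tsum_indicator_dyadInt_le (k : ℤ) (y : ℝ) (c : ℝ≥0∞) :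
    ∑' n : ℤ, (dyadInt k n).indicator (fun _ => c) y ≤ 2 * c := by
  have h2 : (0:ℝ) < 2 ^ k := by positivity
  calc ∑' n : ℤ, (dyadInt k n).indicator (fun _ => c) y
      ≤ ∑' n : ℤ, ((if n = ⌊y / 2 ^ k⌋ then c else 0) + if n = ⌈y / 2 ^ k⌉ - 1 then c else 0) := by
        refine ENNReal.tsum_le_tsum fun n => ?_
        by_cases hy : y ∈ dyadInt k n
        · rw [Set.indicator_of_mem hy]
          have h3 : (n:ℝ) ≤ y / 2 ^ k := by rw [le_div_iff₀ h2, mul_comm]; exact hy.1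
          have h4 : y / 2 ^ k ≤ n + 1 := by rw [div_le_iff₀ h2, mul_comm]; exact hy.2
          rcases h4.lt_or_eq with h5 | h5
          · have : n = ⌊y / 2 ^ k⌋ := (Int.floor_eq_iff.2 ⟨h3, h5⟩).symm
            rw [if_pos this]; exact le_self_add
          · have : n = ⌈y / 2 ^ k⌉ - 1 := by
              rw [h5, eq_sub_iff_add_eq]
              exact_mod_cast (Int.ceil_intCast (R := ℝ) (n + 1)).symm
            rw [if_pos this]; exact le_add_self
        · rw [Set.indicator_of_notMem hy]; exact zero_le
    _ = 2 * c := by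
        rw [ENNReal.tsum_add, tsum_ite_eq, tsum_ite_eq, two_mul]

lemma measurableSet_strip (k n : ℤ) : MeasurableSet ((Set.univ : Set ℝ) ×ˢ dyadInt k n) :=
  MeasurableSet.univ.prod measurableSet_Icc

/-- Strips `ℝ × J` of a fixed scale overlap at most twice, so summing over all of them costs a
factor `2`; the sum over the scales is moved inside the integral. -/
lemma tsum_setLIntegral_strip_le (c : ℤ → ℝ≥0∞) (h : ℤ → ℝ × ℝ → ℝ≥0∞)
    (hh : ∀ k, Measurable (h k)) :
    ∑' r : ℤ × ℤ, c r.1 * ∫⁻ z in Set.univ ×ˢ dyadInt r.1 r.2, h r.1 z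
      ≤ 2 * ∫⁻ z, ∑' k, c k * h k z := by
  rw [ENNReal.tsum_prod', lintegral_tsum fun k => ((hh k).const_mul _).aemeasurable,
    ← ENNReal.tsum_mul_left]
  refine ENNReal.tsum_le_tsum fun k => ?_
  simp only
  rw [ENNReal.tsum_mul_left, lintegral_const_mul _ (hh k), mul_left_comm]
  gcongr
  simp only [← lintegral_indicator (measurableSet_strip _ _)]
  rw [← lintegral_tsum fun n => ((hh k).indicator (measurableSet_strip _ _)).aemeasurable,
    ← lintegral_const_mul _ (hh k)]
  refine lintegral_mono fun z => ?_
  refine le_trans (le_of_eq (tsum_congr fun n => ?_)) (tsum_indicator_dyadInt_le k z.2 (h k z))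
  by_cases hz : z.2 ∈ dyadInt k n
  · rw [Set.indicator_of_mem hz, Set.indicator_of_mem (Set.mem_prod.2 ⟨Set.mem_univ _, hz⟩)]
  · rw [Set.indicator_of_notMem hz, Set.indicator_of_notMem fun h => hz (Set.mem_prod.1 h).2]

lemma setLIntegral_strip_fst (k n : ℤ) {g : ℝ → ℝ≥0∞} (hg : Measurable g) :
    ∫⁻ z in Set.univ ×ˢ dyadInt k n, g z.1 = (2:ℝ≥0∞) ^ (k:ℝ) * ∫⁻ x, g x := by
  rw [Measure.volume_eq_prod, ← Measure.prod_restrict, lintegral_prod _ (by fun_prop)]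
  simp only [lintegral_const, Measure.restrict_univ, MeasurableSet.univ, Measure.restrict_apply,
    Set.univ_inter]
  rw [lintegral_mul_const _ hg, mul_comm]
  congr 1
  rw [dyadInt, Real.volume_Icc, ← mul_sub, add_sub_cancel_left, mul_one, ← Real.rpow_intCast,
    ← ENNReal.ofReal_rpow_of_pos two_pos, ENNReal.ofReal_ofNat]

/-! ### The mixed norm estimate -/

/-- The estimate for arbitrary measurable data: `u` plays the role of `|f|` and `A x` that of
the `L²_y`-norm of `f (x, ·)`. The exponent `11 * p / 20` is `p / q` with `q = 20 / 11`. -/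
lemma mixed_norm_estimate (p : ℝ) (hp : 2 < p) : ∃ C : ℝ≥0∞, C ≠ ⊤ ∧
    ∀ (u : ℝ × ℝ → ℝ≥0∞) (A : ℝ → ℝ≥0∞), Measurable u → Measurable A →
      (∀ z, u z ≠ ⊤) → (∀ x, A x ≠ ⊤) → (∀ z, A z.1 = 0 → u z = 0) →
      (∀ x, ∫⁻ y, u (x, y) ^ (2:ℝ) ≤ A x ^ (2:ℝ)) →
      ∑' r : ℤ × ℤ, (2:ℝ≥0∞) ^ (-(r.1:ℝ) * (p / 20)) *
        (∫⁻ z in Set.univ ×ˢ dyadInt r.1 r.2, u z ^ (20 / 11 : ℝ)) ^ (11 * p / 20)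
      ≤ C * (∫⁻ x, A x ^ (20 / 11 : ℝ)) ^ (11 * p / 20) := by
  obtain ⟨C₁, hC₁, h₁⟩ := tsum_two_rpow_neg_le (a := 1 / 11) (by norm_num)
  obtain ⟨C₂, hC₂, h₂⟩ := tsum_two_rpow_le (a := p / 2 - 1) (by linarith)
  refine ⟨2 ^ (11 * p / 20 - 1) * ((2 * C₁) ^ (11 * p / 20) + 2 * C₂), ?_, ?_⟩
  · have : 0 ≤ 11 * p / 20 := by linarith
    have : 0 ≤ 11 * p / 20 - 1 := by linarith
    finiteness
  intro u A hu hA hut hAt hAu hint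
  set M : ℝ≥0∞ := ∫⁻ x, A x ^ (20 / 11 : ℝ) with hM
  set t : ℝ × ℝ → ℝ≥0∞ := fun z => A z.1 ^ (2:ℝ) / u z ^ (2:ℝ) with ht
  have htm : Measurable t := by fun_prop
  -- The large and the small part of `u` are both controlled, after summation over the scales, by
  -- `G = A ^ (q - 2) * u ^ 2`, whose integral is at most that of `A ^ q`, where `q = 20 / 11`.
  set G : ℝ × ℝ → ℝ≥0∞ := fun z => A z.1 ^ (-(2 / 11) : ℝ) * u z ^ (2:ℝ) with hG
  have hGM : ∫⁻ z, G z ≤ M := by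
    rw [Measure.volume_eq_prod, lintegral_prod _ (by fun_prop)]
    refine lintegral_mono fun x => ?_
    simp only [hG]
    rw [lintegral_const_mul _ (by fun_prop)]
    refine (mul_le_mul_right (hint x) _).trans ?_
    rcases eq_or_ne (A x) 0 with h0 | h0
    · simp [h0]
    · rw [← ENNReal.rpow_add _ _ h0 (hAt x)]
      norm_num
  -- `B k` and `S k` are `u ^ q` where `u > 2 ^ (-k / 2) * A` and where the opposite inequality
  -- holds (up to points with `u = 0`); `T k` is the weighted `p`-th power replacing `S k` after
  -- Hölder's inequality.
  set B : ℤ → ℝ × ℝ → ℝ≥0∞ := fun k z =>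
    if t z < (2:ℝ≥0∞) ^ (k:ℝ) then u z ^ (20 / 11 : ℝ) else 0 with hB
  set S : ℤ → ℝ × ℝ → ℝ≥0∞ := fun k z =>
    if (2:ℝ≥0∞) ^ (k:ℝ) ≤ t z then u z ^ (20 / 11 : ℝ) else 0 with hS
  set T : ℤ → ℝ × ℝ → ℝ≥0∞ := fun k z =>
    if (2:ℝ≥0∞) ^ (k:ℝ) ≤ t z then u z ^ p * A z.1 ^ (20 / 11 - p) else 0 with hT
  have hBm : ∀ k, Measurable (B k) := fun k =>
    Measurable.ite (measurableSet_lt htm measurable_const) (by fun_prop) measurable_const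
  have hSm : ∀ k, Measurable (S k) := fun k =>
    Measurable.ite (measurableSet_le measurable_const htm) (by fun_prop) measurable_const
  have hTm : ∀ k, Measurable (T k) := fun k =>
    Measurable.ite (measurableSet_le measurable_const htm) (by fun_prop) measurable_const
  have hlog : ∀ z, u z ≠ 0 → ∀ a : ℝ, t z ^ a = A z.1 ^ (2 * a) * u z ^ (-(2 * a)) := by
    intro z hz a
    have hA0 : A z.1 ≠ 0 := fun h => hz (hAu z h)
    have h1 : u z ^ (2:ℝ) ≠ 0 := by simp [hz]
    have h2 : u z ^ (2:ℝ) ≠ ⊤ := by simp [hut z]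
    have h3 : A z.1 ^ (2:ℝ) ≠ ⊤ := by simp [hAt z.1]
    simp only [ht]
    rw [div_eq_mul_inv, ENNReal.mul_rpow_of_ne_top h3 (by simpa using hz), ENNReal.inv_rpow,
      ← ENNReal.rpow_mul, ← ENNReal.rpow_mul, ENNReal.rpow_neg]
  have hBG : ∀ z, ∑' k : ℤ, (2:ℝ≥0∞) ^ (-(k:ℝ) * (1 / 11)) * B k z ≤ C₁ * G z := by
    intro z
    rcases eq_or_ne (u z) 0 with h0 | h0
    · simp [hB, h0]
    calc _ = (∑' k : ℤ, if t z < (2:ℝ≥0∞) ^ (k:ℝ) then (2:ℝ≥0∞) ^ (-(k:ℝ) * (1 / 11)) else 0)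
          * u z ^ (20 / 11 : ℝ) := by
          rw [← ENNReal.tsum_mul_right]
          refine tsum_congr fun k => ?_
          simp only [hB]; split_ifs <;> simp
      _ ≤ C₁ * t z ^ (-(1 / 11) : ℝ) * u z ^ (20 / 11 : ℝ) := by gcongr; exact h₁ _
      _ = C₁ * G z := by
          rw [hlog z h0, mul_assoc, mul_assoc, ← ENNReal.rpow_add _ _ h0 (hut z)]
          simp only [hG]; norm_num
  have hTG : ∀ z, ∑' k : ℤ, (2:ℝ≥0∞) ^ ((k:ℝ) * (p / 2 - 1)) * T k z ≤ C₂ * G z := by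
    intro z
    rcases eq_or_ne (u z) 0 with h0 | h0
    · have : 0 < p := by linarith
      simp [hT, h0, this]
    have hA0 : A z.1 ≠ 0 := fun h => h0 (hAu z h)
    calc _ = (∑' k : ℤ, if (2:ℝ≥0∞) ^ (k:ℝ) ≤ t z then (2:ℝ≥0∞) ^ ((k:ℝ) * (p / 2 - 1)) else 0)
          * (u z ^ p * A z.1 ^ (20 / 11 - p)) := by
          rw [← ENNReal.tsum_mul_right]
          refine tsum_congr fun k => ?_
          simp only [hT]; split_ifs <;> simp
      _ ≤ C₂ * t z ^ (p / 2 - 1) * (u z ^ p * A z.1 ^ (20 / 11 - p)) := by gcongr; exact h₂ _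
      _ = C₂ * ((A z.1 ^ (2 * (p / 2 - 1)) * A z.1 ^ (20 / 11 - p)) *
            (u z ^ (-(2 * (p / 2 - 1))) * u z ^ p)) := by
          rw [hlog z h0]; ring
      _ = C₂ * G z := by
          rw [← ENNReal.rpow_add _ _ h0 (hut z), ← ENNReal.rpow_add _ _ hA0 (hAt _)]
          simp only [hG]
          congr 3 <;> ring
  -- Hölder's inequality with exponent `p / q` against the weight `A ^ q`, whose integral over a
  -- strip of height `2 ^ k` is `2 ^ k * M`.
  have hholder : ∀ k n : ℤ, (∫⁻ z in Set.univ ×ˢ dyadInt k n, S k z) ^ (11 * p / 20) ≤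
      (∫⁻ z in Set.univ ×ˢ dyadInt k n, T k z) * ((2:ℝ≥0∞) ^ (k:ℝ) * M) ^ (11 * p / 20 - 1) := by
    intro k n
    have hp0 : p ≠ 0 := by linarith
    have hq : 20 / (11 * p) ≤ 1 := by rw [div_le_one (by linarith)]; linarith
    have hST : ∀ z, S k z ≤ T k z ^ (20 / (11 * p)) *
        (A z.1 ^ (20 / 11 : ℝ)) ^ (1 - 20 / (11 * p)) := by
      intro z
      rcases eq_or_ne (u z) 0 with h0 | h0
      · simp [hS, h0]
      have hA0 : A z.1 ≠ 0 := fun h => h0 (hAu z h)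
      simp only [hS, hT]
      split_ifs with h
      · rw [ENNReal.mul_rpow_of_ne_zero (by simp [h0, hut z]) (by simp [hA0, hAt z.1]),
          ← ENNReal.rpow_mul, ← ENNReal.rpow_mul, ← ENNReal.rpow_mul, mul_assoc,
          ← ENNReal.rpow_add _ _ hA0 (hAt _)]
        have e1 : p * (20 / (11 * p)) = 20 / 11 := by field_simp
        have e2 : (20 / 11 - p) * (20 / (11 * p)) + 20 / 11 * (1 - 20 / (11 * p)) = 0 := by
          field_simp; ring
        rw [e1, e2]; simp
      · exact zero_le
    have h11 : 0 < 11 * p / 20 := by linarith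
    calc _ ≤ ((∫⁻ z in Set.univ ×ˢ dyadInt k n, T k z) ^ (20 / (11 * p)) *
          (∫⁻ z in Set.univ ×ˢ dyadInt k n, A z.1 ^ (20 / 11 : ℝ)) ^ (1 - 20 / (11 * p)))
            ^ (11 * p / 20) := by
          gcongr
          refine (lintegral_mono hST).trans ?_
          exact ENNReal.lintegral_mul_norm_pow_le (hTm k).aemeasurable (by fun_prop)
            (by positivity) (by linarith) (by ring)
      _ = _ := by
          rw [setLIntegral_strip_fst k n (g := fun x => A x ^ (20 / 11 : ℝ)) (by fun_prop),
            ENNReal.mul_rpow_of_nonneg _ _ h11.le, ← ENNReal.rpow_mul, ← ENNReal.rpow_mul]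
          have e1 : 20 / (11 * p) * (11 * p / 20) = 1 := by field_simp
          have e2 : (1 - 20 / (11 * p)) * (11 * p / 20) = 11 * p / 20 - 1 := by
            field_simp
          rw [e1, e2, ENNReal.rpow_one]
  have hM1 : M * M ^ (11 * p / 20 - 1) = M ^ (11 * p / 20) := by
    conv_lhs => rw [← ENNReal.rpow_one M, ← ENNReal.rpow_mul, one_mul]
    rw [← ENNReal.rpow_add_of_nonneg _ _ zero_le_one (by linarith)]
    congr 1; ring
  have hlarge : ∑' r : ℤ × ℤ, (2:ℝ≥0∞) ^ (-(r.1:ℝ) * (p / 20)) *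
      (∫⁻ z in Set.univ ×ˢ dyadInt r.1 r.2, B r.1 z) ^ (11 * p / 20)
      ≤ (2 * C₁) ^ (11 * p / 20) * M ^ (11 * p / 20) := by
    calc _ = ∑' r : ℤ × ℤ, ((2:ℝ≥0∞) ^ (-(r.1:ℝ) * (1 / 11)) *
          ∫⁻ z in Set.univ ×ˢ dyadInt r.1 r.2, B r.1 z) ^ (11 * p / 20) := by
          refine tsum_congr fun r => ?_
          rw [ENNReal.mul_rpow_of_nonneg _ _ (by linarith), ← ENNReal.rpow_mul]
          congr 2; ring
      _ ≤ (∑' r : ℤ × ℤ, (2:ℝ≥0∞) ^ (-(r.1:ℝ) * (1 / 11)) *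
          ∫⁻ z in Set.univ ×ˢ dyadInt r.1 r.2, B r.1 z) ^ (11 * p / 20) :=
          tsum_rpow_le_rpow_tsum _ (by linarith)
      _ ≤ (2 * C₁ * M) ^ (11 * p / 20) := by
          refine ENNReal.rpow_le_rpow ?_ (by linarith)
          refine (tsum_setLIntegral_strip_le
            (fun k => (2:ℝ≥0∞) ^ (-(k:ℝ) * (1 / 11))) B hBm).trans ?_
          rw [mul_assoc]
          gcongr
          refine (lintegral_mono hBG).trans ?_
          rw [lintegral_const_mul _ (by fun_prop)]
          gcongr
      _ = _ := ENNReal.mul_rpow_of_nonneg _ _ (by linarith)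
  have hsmall : ∑' r : ℤ × ℤ, (2:ℝ≥0∞) ^ (-(r.1:ℝ) * (p / 20)) *
      (∫⁻ z in Set.univ ×ˢ dyadInt r.1 r.2, S r.1 z) ^ (11 * p / 20)
      ≤ 2 * C₂ * M ^ (11 * p / 20) := by
    calc _ ≤ ∑' r : ℤ × ℤ, (2:ℝ≥0∞) ^ ((r.1:ℝ) * (p / 2 - 1)) *
          (∫⁻ z in Set.univ ×ˢ dyadInt r.1 r.2, T r.1 z) * M ^ (11 * p / 20 - 1) := by
          refine ENNReal.tsum_le_tsum fun r => ?_
          refine (mul_le_mul_right (hholder r.1 r.2) _).trans (le_of_eq ?_)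
          have e : (r.1:ℝ) * (p / 2 - 1) = -(r.1:ℝ) * (p / 20) + r.1 * (11 * p / 20 - 1) := by ring
          rw [ENNReal.mul_rpow_of_nonneg _ _ (by linarith), ← ENNReal.rpow_mul, e,
            ENNReal.rpow_add _ _ two_ne_zero ENNReal.ofNat_ne_top]
          ring
      _ ≤ 2 * (C₂ * M) * M ^ (11 * p / 20 - 1) := by
          rw [ENNReal.tsum_mul_right]
          gcongr
          refine (tsum_setLIntegral_strip_le
            (fun k => (2:ℝ≥0∞) ^ ((k:ℝ) * (p / 2 - 1))) T hTm).trans ?_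
          gcongr
          refine (lintegral_mono hTG).trans ?_
          rw [lintegral_const_mul _ (by fun_prop)]
          gcongr
      _ = _ := by rw [← hM1]; ring
  have hsplit : ∀ k n : ℤ, ∫⁻ z in Set.univ ×ˢ dyadInt k n, u z ^ (20 / 11 : ℝ) =
      (∫⁻ z in Set.univ ×ˢ dyadInt k n, B k z) + ∫⁻ z in Set.univ ×ˢ dyadInt k n, S k z := by
    intro k n
    rw [← lintegral_add_left (hBm k)]
    refine lintegral_congr fun z => ?_
    simp only [hB, hS]
    rcases lt_or_ge (t z) ((2:ℝ≥0∞) ^ (k:ℝ)) with h | h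
    · rw [if_pos h, if_neg (not_le.2 h), add_zero]
    · rw [if_pos h, if_neg (not_lt.2 h), zero_add]
  calc _ ≤ ∑' r : ℤ × ℤ, 2 ^ (11 * p / 20 - 1) *
        ((2:ℝ≥0∞) ^ (-(r.1:ℝ) * (p / 20)) *
            (∫⁻ z in Set.univ ×ˢ dyadInt r.1 r.2, B r.1 z) ^ (11 * p / 20) +
          (2:ℝ≥0∞) ^ (-(r.1:ℝ) * (p / 20)) *
            (∫⁻ z in Set.univ ×ˢ dyadInt r.1 r.2, S r.1 z) ^ (11 * p / 20)) := by
        refine ENNReal.tsum_le_tsum fun r => ?_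
        rw [hsplit, ← mul_add, mul_left_comm]
        gcongr
        exact ENNReal.rpow_add_le_mul_rpow_add_rpow _ _ (by linarith)
    _ ≤ 2 ^ (11 * p / 20 - 1) * ((2 * C₁) ^ (11 * p / 20) * M ^ (11 * p / 20) +
          2 * C₂ * M ^ (11 * p / 20)) := by
        rw [ENNReal.tsum_mul_left, ENNReal.tsum_add]
        gcongr
    _ = _ := by ring

/-! ### Smooth compactly supported functions -/

/-- **Two-dimensional conditional `X_p`-type estimate**: for `p > 2`, for any
interval `I ⊂ ℝ` and any `f ∈ C_c^∞(ℝ²)` supported in `I × ℝ`,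
`Σ_{J ∈ 𝓓} |J|^{−p/20} ‖f·1_{I×J}‖_{L^{20/11}}^p ≤ C(p) ‖f‖_{L^{20/11}_x L²_y}^p`. -/
theorem two_dimensional_conditional_Xp_estimate (p : ℝ) (hp : 2 < p) :
    ∃ C : ℝ, 0 < C ∧ ∀ (I : Set ℝ), I.OrdConnected →
      ∀ f : ℝ × ℝ → ℂ, ContDiff ℝ (⊤ : ℕ∞) f → HasCompactSupport f →
      (∀ q : ℝ × ℝ, q.1 ∉ I → f q = 0) →
      (∑' r : ℤ × ℤ,
        ENNReal.ofReal (((2:ℝ)^r.1) ^ (-(p/20))) *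
          eLpNorm ((I ×ˢ dyadInt r.1 r.2).indicator f) (ENNReal.ofReal (20/11))
            (volume : Measure (ℝ × ℝ)) ^ p) ≤
        ENNReal.ofReal C *
          ENNReal.ofReal
            (((∫ x in I, (∫ y : ℝ, ‖f (x, y)‖^2) ^ ((20/11) * (1/2) : ℝ)) ^ (11/20 : ℝ)) ^ p) := by
  obtain ⟨C, hC, h⟩ := mixed_norm_estimate p hp
  refine ⟨C.toReal + 1, by positivity, fun I _ f hf hfc hfI => ?_⟩
  have hcont : Continuous f := hf.continuous
  have hcontx : ∀ x, Continuous fun y => f (x, y) := fun x => by fun_prop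
  set K : Set ℝ := Prod.snd '' tsupport f with hK
  have hKc : IsCompact K := hfc.isCompact.image continuous_snd
  have hKf : ∀ x y, y ∉ K → f (x, y) = 0 := fun x y hy =>
    image_eq_zero_of_notMem_tsupport fun hmem => hy ⟨(x, y), hmem, rfl⟩
  set K' : Set ℝ := Prod.fst '' tsupport f with hK'
  have hKc' : IsCompact K' := hfc.isCompact.image continuous_fst
  have hKf' : ∀ x y, x ∉ K' → f (x, y) = 0 := fun x y hx =>
    image_eq_zero_of_notMem_tsupport fun hmem => hx ⟨(x, y), hmem, rfl⟩
  set Q : ℝ → ℝ := fun x => ∫ y, ‖f (x, y)‖ ^ 2 with hQ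
  have hQ0 : ∀ x, 0 ≤ Q x := fun x => integral_nonneg fun y => by positivity
  have hQc : Continuous Q := by
    rw [← continuousOn_univ]
    refine continuousOn_integral_of_compact_support (f := fun x y => ‖f (x, y)‖ ^ 2) hKc ?_ ?_
    · exact Continuous.continuousOn (by simp only [Function.uncurry_def]; fun_prop)
    · intro x y _ hy
      simp [hKf x y hy]
  have hQK : ∀ x, x ∉ K' → Q x = 0 := fun x hx => by simp [hQ, hKf' x _ hx]
  have hQI : ∀ x, x ∉ I → Q x = 0 := fun x hx => by
    have : ∀ y, f (x, y) = 0 := fun y => hfI (x, y) hx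
    simp [hQ, this]
  have hfint : ∀ x, Integrable fun y => ‖f (x, y)‖ ^ 2 := fun x =>
    Continuous.integrable_of_hasCompactSupport (by fun_prop)
      (HasCompactSupport.intro hKc fun y hy => by simp [hKf x y hy])
  have hlint : ∀ x, ∫⁻ y, ‖f (x, y)‖ₑ ^ (2:ℝ) = ENNReal.ofReal (Q x) := fun x => by
    rw [hQ, ofReal_integral_eq_lintegral_ofReal (hfint x) (ae_of_all _ fun y => by positivity)]
    refine lintegral_congr fun y => ?_
    rw [ENNReal.ofReal_pow (norm_nonneg _), ofReal_norm, ENNReal.rpow_ofNat]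
  have hmain := h (fun z => ‖f z‖ₑ) (fun x => ENNReal.ofReal (Q x) ^ (1 / 2 : ℝ))
    (by fun_prop) (by fun_prop) (fun z => enorm_ne_top) (fun x => by finiteness)
    (fun z hz => by
      -- A continuous function with vanishing `L²`-norm vanishes identically.
      have h0 : ∫⁻ y, ‖f (z.1, y)‖ₑ ^ (2:ℝ) = 0 := by
        rw [hlint]; simpa [ENNReal.rpow_eq_zero_iff] using hz
      rw [lintegral_eq_zero_iff ((hcontx z.1).enorm.measurable.pow_const _)] at h0
      have h1 : (fun y => f (z.1, y)) =ᵐ[volume] fun _ => 0 := by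
        filter_upwards [h0] with y hy
        simpa using hy
      have h2 := (hcontx z.1).ae_eq_iff_eq volume continuous_const |>.1 h1
      have h3 : f z = 0 := congrFun h2 z.2
      simp [h3])
    (fun x => by rw [hlint, ← ENNReal.rpow_mul]; norm_num)
  have hR : ∫⁻ x, (ENNReal.ofReal (Q x) ^ (1 / 2 : ℝ)) ^ (20 / 11 : ℝ) =
      ENNReal.ofReal (∫ x in I, Q x ^ ((20/11) * (1/2) : ℝ)) := by
    rw [setIntegral_eq_integral_of_forall_compl_eq_zero
        (fun x hx => by rw [hQI x hx]; exact Real.zero_rpow (by norm_num)),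
      ofReal_integral_eq_lintegral_ofReal]
    · refine lintegral_congr fun x => ?_
      rw [← ENNReal.rpow_mul, ENNReal.ofReal_rpow_of_nonneg (hQ0 x) (by norm_num), mul_comm]
    · refine Continuous.integrable_of_hasCompactSupport
        (hQc.rpow_const fun x => Or.inr (by norm_num))
        (HasCompactSupport.intro hKc' fun x hx => ?_)
      rw [hQK x hx]; exact Real.zero_rpow (by norm_num)
    · exact ae_of_all _ fun x => Real.rpow_nonneg (hQ0 x) _
  have hint0 : 0 ≤ ∫ x in I, Q x ^ ((20/11) * (1/2) : ℝ) :=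
    integral_nonneg fun x => Real.rpow_nonneg (hQ0 x) _
  rw [hR] at hmain
  refine le_trans (le_of_eq_of_le (tsum_congr fun r => ?_) hmain) ?_
  · congr 1
    · have h2 : ((2:ℝ) ^ r.1) ^ (-(p / 20)) = (2:ℝ) ^ (-(r.1:ℝ) * (p / 20)) := by
        rw [← Real.rpow_intCast, ← Real.rpow_mul two_pos.le]; congr 1; ring
      rw [h2, ← ENNReal.ofReal_rpow_of_pos two_pos]
      simp
    · have hind : (I ×ˢ dyadInt r.1 r.2).indicator f =
          (Set.univ ×ˢ dyadInt r.1 r.2).indicator f := by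
        ext z
        by_cases hz : z.1 ∈ I
        · exact Set.indicator_eq_indicator (by simp only [Set.mem_prod, hz, Set.mem_univ]) rfl
        · simp [Set.indicator, hfI z hz]
      rw [hind, eLpNorm_indicator_eq_eLpNorm_restrict (measurableSet_strip _ _),
        eLpNorm_eq_lintegral_rpow_enorm_toReal (by simp) (by simp),
        ENNReal.toReal_ofReal (by norm_num), ← ENNReal.rpow_mul]
      congr 1; ring
  · gcongr
    · rw [ENNReal.le_ofReal_iff_toReal_le hC (by positivity)]; linarith
    · rw [← Real.rpow_mul hint0, ENNReal.ofReal_rpow_of_nonneg hint0 (by linarith)]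
      apply le_of_eq; congr 2; ring
end
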